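/- Let ε > 0, let M ≥ 1 be an integer, and let c, c', c₀ > 0 and d_j (j ≥ 0) be constants. Suppose: N, T, K, P > 1 with N^ε < K ≤ c'·T and N^{1+ε} < PK, X = P²K²/N; V is smooth, supported in [1,2], with |V^{(j)}(x)| ≤ d_j·Δ^j for all j ≥ 0 where 1 ≤ Δ ≤ T·N^{−ε}, and total variation Var(V) ≤ 1; φ : (1/2, 5/2) → ℝ is smooth with |φ^{(j)}(x)| ≤ c' for j = 2, 3 and |φ''(x)| ≥ c₀ on (1/2, 5/2); p₁ = p₂ = p is a prime in [P, 2P]; r₁, r₂ are integers with |r_i − γ·p| ≤ c·PT/N for i = 1, 2; γ is real; U : ℝ → ℝ is a fixed smooth function supported in [1,2]. Then there are C and T₀, depending only on ε, M, c, c', c₀, U and the d_j, such that for T ≥ T₀: |ℒ(0)| ≤ C/T, and moreover if r₁ ≠ r₂ then |ℒ(0)| ≤ C·P·N^ε/(K·N·|r₁ − r₂|); that is, |ℒ(0)| ≤ C·min{1/T, P·N^ε/(K·N·|r₁ − r₂|)} when r₁ ≠ r₂. -/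

import Mathlib

/-- `e(t) = exp(2πit)`. -/
noncomputable def e (t : ℝ) : ℂ := Complex.exp (2 * (Real.pi : ℂ) * Complex.I * t)

/-- The oscillatory integral
`𝒥(y,r,p) = ∫_0^∞ V(x) e(Tφ(x) + γNx + 2√(Nxy)/(√M p) − rNx/p) dx`. -/
noncomputable def Jcal (V : ℝ → ℂ) (φ : ℝ → ℝ) (M : ℕ) (N T γ : ℝ) (p : ℕ) (r : ℤ)
    (y : ℝ) : ℂ :=
  ∫ x in Set.Ioi (0 : ℝ),
    V x * e (T * φ x + γ * N * x + 2 * Real.sqrt (N * x * y) / (Real.sqrt M * p)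
      - r * N * x / p)

/-- The integral `ℒ(x) = ∫_0^∞ U(y) 𝒥(MXy,r₁,p₁) conj(𝒥(MXy,r₂,p₂)) e(−xy) dy`. -/
noncomputable def Lcal (U : ℝ → ℝ) (V : ℝ → ℂ) (φ : ℝ → ℝ) (M : ℕ) (N T γ X : ℝ)
    (p₁ p₂ : ℕ) (r₁ r₂ : ℤ) (x : ℝ) : ℂ :=
  ∫ y in Set.Ioi (0 : ℝ),
    (U y : ℂ) * Jcal V φ M N T γ p₁ r₁ ((M : ℝ) * X * y) *
      (starRingEnd ℂ) (Jcal V φ M N T γ p₂ r₂ ((M : ℝ) * X * y)) * e (-(x * y))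

/-!
The substitution `y = w²` turns `ℒ(0)` into the integral over `[1, 2]²` of
`V(x) conj V(y) e(Φ₁(x) - Φ₂(y)) K(B(S(x) - S(y)))`, where `Φᵢ(x) = Tφ(x) - aᵢx`,
`aᵢ = (rᵢ - γp)N/p`, `B = 2PK/p`, `S` is the square root, and `K`, the Fourier transform of a smooth
weight of compact support, decays rapidly.

First bound: if `B` is small compared with `T`, the phase of each `𝒥` has second derivative of size
`T`, and the second derivative test gives `𝒥 ≪ T^(-1/2)`; otherwise the decay of `K` restricts the
integral to `|x - y| ≪ 1/B ≪ 1/T`.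

Second bound: it suffices to show that the integral is `O(1/(B|a₁ - a₂|))`, so the weight
`a₁ - a₂` has to be traded for cheap ones. A factor `S(x) - S(y)` is absorbed into `K` by
differentiating the weight, which gives `O(1/(BT))` by the first bound; a factor `(x - y)²` gains
`1/B²` from the decay of `K`; a factor `Φ₁'(x)` or `Φ₂'(y)` is integrated by parts, the new terms
being the one with `V'`, which is `O(1/B)`, and the one with `B S' K'`, which is `O(B/T)`.
* If `T ≤ B²`, write `a₁ - a₂ = T(φ'(x) - φ'(y)) - (Φ₁'(x) - Φ₂'(y))`. The two terms with `K'`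
  cancel to first order, leaving `B(S'(x) - S'(y))K' = O(|K'| B|x - y|)`, and `φ'(x) - φ'(y)` is
  `(φ''/S')(x)(S(x) - S(y))` up to `O((x - y)²)`.
* If `B² ≤ T`, let `ξᵢ` be the zero of `Φᵢ'`. Then `|a₁ - a₂| ≍ T|S(ξ₁) - S(ξ₂)|`, where
  `S(ξ₁) - S(ξ₂) = (S(x) - S(y)) - (S(x) - S(ξ₁)) + (S(y) - S(ξ₂))`, and `T(S(x) - S(ξ₁))` is a
  smooth multiple of `Φ₁'(x)`.

The `ξᵢ` exist because `φ'` and `S` are first extended from `[1, 2]` to the line with comparable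
bounds on their derivatives.
-/

open MeasureTheory Set
open scoped ComplexConjugate FourierTransform ContDiff

section Exponential

lemma e_zero : e 0 = 1 := by simp [e]

lemma e_add (s t : ℝ) : e (s + t) = e s * e t := by
  rw [e, e, e, ← Complex.exp_add]
  congr 1
  push_cast
  ring

lemma norm_e (t : ℝ) : ‖e t‖ = 1 := by
  have h : 2 * (Real.pi : ℂ) * Complex.I * t = ((2 * Real.pi * t : ℝ) : ℂ) * Complex.I := by
    push_cast
    ring
  rw [e, h, Complex.norm_exp_ofReal_mul_I]

lemma conj_e (t : ℝ) : conj (e t) = e (-t) := by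
  simp only [e, ← Complex.exp_conj, map_mul, Complex.conj_I, Complex.conj_ofReal, map_ofNat,
    Complex.ofReal_neg]
  congr 1
  ring

lemma continuous_e : Continuous e := by
  unfold e
  fun_prop

lemma hasDerivAt_e_comp {f : ℝ → ℝ} {f' x : ℝ} (hf : HasDerivAt f f' x) :
    HasDerivAt (fun x ↦ e (f x)) (2 * Real.pi * Complex.I * f' * e (f x)) x := by
  refine ((hf.ofReal_comp.const_mul (2 * (Real.pi : ℂ) * Complex.I)).cexp).congr_deriv ?_
  rw [e]
  ring

end Exponential

section Amplitude

/-- A complex amplitude on `[a, b]`: a `C¹` function vanishing at both ends whose variation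
is at most `D`. Such a function is automatically bounded by `D`. -/
structure IsAmplitude (A : ℝ → ℂ) (a b D : ℝ) : Prop where
  contDiff : ContDiff ℝ 1 A
  left_eq_zero : A a = 0
  right_eq_zero : A b = 0
  integral_norm_deriv_le : ∫ x in a..b, ‖deriv A x‖ ≤ D

variable {A : ℝ → ℂ} {F m : ℝ → ℝ} {a b D M M' x : ℝ}

lemma isAmplitude_of_support_subset_Icc (hA : ContDiff ℝ 1 A)
    (hsupp : Function.support A ⊆ Icc a b) (hD : ∫ x in a..b, ‖deriv A x‖ ≤ D) :
    IsAmplitude A a b D := by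
  have hIoo : Function.support A ⊆ Ioo a b :=
    interior_Icc (a := a) ▸ hA.continuous.isOpen_support.subset_interior_iff.2 hsupp
  exact ⟨hA, Function.notMem_support.1 fun h ↦ (hIoo h).1.false,
    Function.notMem_support.1 fun h ↦ (hIoo h).2.false, hD⟩

lemma IsAmplitude.continuous (hA : IsAmplitude A a b D) : Continuous A :=
  hA.contDiff.continuous

lemma IsAmplitude.continuous_deriv (hA : IsAmplitude A a b D) : Continuous (deriv A) :=
  hA.contDiff.continuous_deriv_one

lemma IsAmplitude.hasDerivAt (hA : IsAmplitude A a b D) (x : ℝ) :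
    HasDerivAt A (deriv A x) x :=
  (hA.contDiff.differentiable one_ne_zero x).hasDerivAt

lemma IsAmplitude.nonneg (hA : IsAmplitude A a b D) (hab : a ≤ b) : 0 ≤ D :=
  (intervalIntegral.integral_nonneg hab fun _ _ ↦ norm_nonneg _).trans hA.integral_norm_deriv_le

lemma IsAmplitude.norm_le (hA : IsAmplitude A a b D) (hx : x ∈ Icc a b) : ‖A x‖ ≤ D := by
  have hint (s t : ℝ) : IntervalIntegrable (fun y ↦ ‖deriv A y‖) volume s t :=
    hA.continuous_deriv.norm.intervalIntegrable s t
  calc ‖A x‖ = ‖∫ y in a..x, deriv A y‖ := by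
        rw [intervalIntegral.integral_eq_sub_of_hasDerivAt (fun y _ ↦ hA.hasDerivAt y)
          (hA.continuous_deriv.intervalIntegrable _ _), hA.left_eq_zero, sub_zero]
    _ ≤ ∫ y in a..x, ‖deriv A y‖ := intervalIntegral.norm_integral_le_integral_norm hx.1
    _ ≤ ∫ y in a..b, ‖deriv A y‖ := intervalIntegral.integral_mono_interval le_rfl hx.1 hx.2
        (ae_of_all _ fun _ ↦ norm_nonneg _) (hint a b)
    _ ≤ D := hA.integral_norm_deriv_le

lemma IsAmplitude.ofReal_mul (hA : IsAmplitude A a b D) (hab : a ≤ b) (hm : ContDiff ℝ 1 m)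
    (hM : ∀ x ∈ Icc a b, |m x| ≤ M) (hM' : ∫ x in a..b, |deriv m x| ≤ M') :
    IsAmplitude (fun x ↦ (m x : ℂ) * A x) a b ((M + M') * D) where
  contDiff := (Complex.ofRealCLM.contDiff.comp hm).mul hA.contDiff
  left_eq_zero := by simp [hA.left_eq_zero]
  right_eq_zero := by simp [hA.right_eq_zero]
  integral_norm_deriv_le := by
    have hderiv (x : ℝ) : deriv (fun x ↦ (m x : ℂ) * A x) x =
        ((deriv m x : ℝ) : ℂ) * A x + m x * deriv A x :=
      ((hm.differentiable one_ne_zero x).hasDerivAt.ofReal_comp.mul (hA.hasDerivAt x)).deriv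
    have hcm : Continuous m := hm.continuous
    have hcA := hA.continuous
    have hcA' := hA.continuous_deriv
    simp only [hderiv]
    calc ∫ x in a..b, ‖((deriv m x : ℝ) : ℂ) * A x + m x * deriv A x‖
        ≤ ∫ x in a..b, (D * |deriv m x| + M * ‖deriv A x‖) := by
          refine intervalIntegral.integral_mono_on hab
            (Continuous.intervalIntegrable (by fun_prop) _ _)
            (Continuous.intervalIntegrable (by fun_prop) _ _) fun x hx ↦ ?_
          refine (norm_add_le _ _).trans ?_
          rw [norm_mul, norm_mul, Complex.norm_real, Complex.norm_real, Real.norm_eq_abs,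
            Real.norm_eq_abs, mul_comm |deriv m x|]
          gcongr
          exacts [hA.norm_le hx, hM x hx]
      _ = D * (∫ x in a..b, |deriv m x|) + M * ∫ x in a..b, ‖deriv A x‖ := by
          rw [intervalIntegral.integral_add (Continuous.intervalIntegrable (by fun_prop) _ _)
            (Continuous.intervalIntegrable (by fun_prop) _ _),
            intervalIntegral.integral_const_mul, intervalIntegral.integral_const_mul]
      _ ≤ D * M' + M * D := by
          gcongr
          exacts [hA.nonneg hab, (abs_nonneg _).trans (hM a (left_mem_Icc.2 hab)),
            hA.integral_norm_deriv_le]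
      _ = (M + M') * D := by ring

lemma IsAmplitude.conj (hA : IsAmplitude A a b D) :
    IsAmplitude (fun x ↦ conj (A x)) a b D where
  contDiff := Complex.conjCLE.contDiff.comp hA.contDiff
  left_eq_zero := by simp [hA.left_eq_zero]
  right_eq_zero := by simp [hA.right_eq_zero]
  integral_norm_deriv_le := by
    have hderiv (x : ℝ) : deriv (fun x ↦ conj (A x)) x = conj (deriv A x) :=
      (hA.hasDerivAt x).star.deriv
    simpa only [hderiv, RCLike.norm_conj] using hA.integral_norm_deriv_le

lemma integral_deriv_mul_e (hA : ContDiff ℝ 1 A) (ha : A a = 0) (hb : A b = 0)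
    (hF : ContDiff ℝ 1 F) :
    ∫ x in a..b, deriv A x * e (F x) =
      -(2 * Real.pi * Complex.I) * ∫ x in a..b, ((deriv F x : ℝ) : ℂ) * A x * e (F x) := by
  have hcA : Continuous A := hA.continuous
  have hcF : Continuous F := hF.continuous
  have hcE : Continuous fun x ↦ e (F x) := continuous_e.comp hcF
  have hparts := intervalIntegral.integral_deriv_mul_eq_sub (a := a) (b := b)
    (fun x _ ↦ (hA.differentiable one_ne_zero x).hasDerivAt)
    (fun x _ ↦ hasDerivAt_e_comp (hF.differentiable one_ne_zero x).hasDerivAt)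
    (hA.continuous_deriv_one.intervalIntegrable _ _)
    (Continuous.intervalIntegrable (by fun_prop) _ _)
  rw [intervalIntegral.integral_add (Continuous.intervalIntegrable (by fun_prop) _ _)
    (Continuous.intervalIntegrable (by fun_prop) _ _), ha, hb, zero_mul, zero_mul,
    sub_zero] at hparts
  rw [eq_neg_of_add_eq_zero_left hparts, neg_mul, ← intervalIntegral.integral_const_mul]
  congr 2 with x
  ring

lemma IsAmplitude.norm_integral_deriv_mul_e_le (hA : IsAmplitude A a b D) (hab : a ≤ b)
    (hF : ContDiff ℝ 1 F) :
    ‖∫ x in a..b, ((deriv F x : ℝ) : ℂ) * A x * e (F x)‖ ≤ D / (2 * Real.pi) := by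
  have hnorm : ‖∫ x in a..b, deriv A x * e (F x)‖ ≤ D := by
    refine (intervalIntegral.norm_integral_le_integral_norm hab).trans ?_
    simpa only [norm_mul, norm_e, mul_one] using hA.integral_norm_deriv_le
  rw [integral_deriv_mul_e hA.contDiff hA.left_eq_zero hA.right_eq_zero hF] at hnorm
  rw [le_div_iff₀' Real.two_pi_pos]
  simpa [abs_of_pos Real.pi_pos] using hnorm

end Amplitude

section VanDerCorput

variable {A : ℝ → ℂ} {F f : ℝ → ℝ} {a b c l D : ℝ}

lemma integral_deriv_div_sq_add_le (hf : ContDiff ℝ 1 f) (hl : 0 < l) :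
    ∫ x in a..b, deriv f x / (f x ^ 2 + l) ≤ Real.pi / √l := by
  have hsq : √l ^ 2 = l := Real.sq_sqrt hl.le
  have hcf' := hf.continuous_deriv_one
  have hcont : Continuous fun x ↦ deriv f x / (f x ^ 2 + l) :=
    hcf'.div₀ (by fun_prop) fun x ↦ by positivity
  have hderiv (x : ℝ) : HasDerivAt (fun x ↦ Real.arctan (f x / √l) / √l)
      (deriv f x / (f x ^ 2 + l)) x := by
    refine (((hf.differentiable one_ne_zero x).hasDerivAt.div_const √l).arctan.div_const
      √l).congr_deriv ?_
    rw [div_pow, hsq]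
    field_simp
    rw [hsq]
    ring
  rw [intervalIntegral.integral_eq_sub_of_hasDerivAt (fun x _ ↦ hderiv x)
    (hcont.intervalIntegrable a b), ← sub_div]
  gcongr
  linarith [Real.arctan_lt_pi_div_two (f b / √l), Real.neg_pi_div_two_lt_arctan (f a / √l)]

lemma integral_one_div_one_add_sq_le (hc : 0 < c) (x : ℝ) :
    ∫ y in a..b, 1 / (1 + (c * (x - y)) ^ 2) ≤ Real.pi / c := by
  have harctan := integral_deriv_div_sq_add_le (a := a) (b := b) (f := fun y ↦ c * (y - x))
    (by fun_prop) one_pos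
  have hderiv (y : ℝ) : deriv (fun y ↦ c * (y - x)) y = c := by
    simp
  simp only [hderiv, Real.sqrt_one, div_one] at harctan
  rw [le_div_iff₀' hc, ← intervalIntegral.integral_const_mul]
  refine (intervalIntegral.integral_congr fun y _ ↦ ?_).trans_le harctan
  ring

/-- Regularisation of `1 / t`, bounded by `1 / √l`; the van der Corput argument divides the
phase derivative out with it. -/
noncomputable def regInv (l t : ℝ) : ℝ := t / (t ^ 2 + l)

lemma abs_regInv_le (hl : 0 < l) (t : ℝ) : |regInv l t| ≤ 1 / √l := by
  have hs : 0 < √l := Real.sqrt_pos.2 hl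
  have hsq : √l ^ 2 = l := Real.sq_sqrt hl.le
  have hden : 0 < t ^ 2 + l := by positivity
  rw [regInv, abs_div, abs_of_pos hden, div_le_div_iff₀ hden hs]
  nlinarith [sq_nonneg (|t| - √l), sq_abs t, abs_nonneg t]

lemma regInv_mul_add (hl : 0 < l) (t : ℝ) : regInv l t * t + l / (t ^ 2 + l) = 1 := by
  have hden : t ^ 2 + l ≠ 0 := by positivity
  rw [regInv]
  field_simp

lemma contDiff_regInv_comp (hf : ContDiff ℝ 1 f) (hl : 0 < l) :
    ContDiff ℝ 1 fun x ↦ regInv l (f x) :=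
  hf.div (by fun_prop) fun x ↦ by positivity

lemma abs_deriv_regInv_comp_le (hf : ContDiff ℝ 1 f) (hl : 0 < l) (x : ℝ) :
    |deriv (fun x ↦ regInv l (f x)) x| ≤ |deriv f x| / (f x ^ 2 + l) := by
  have hfx := (hf.differentiable one_ne_zero x).hasDerivAt
  have hden : 0 < f x ^ 2 + l := by positivity
  have hderiv : deriv (fun x ↦ regInv l (f x)) x =
      deriv f x / (f x ^ 2 + l) * ((l - f x ^ 2) / (f x ^ 2 + l)) := by
    refine ((hfx.div ((hfx.pow 2).add_const l) hden.ne').congr_deriv ?_).deriv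
    simp only [Pi.pow_apply]
    field_simp
    ring
  rw [hderiv, abs_mul, abs_div (deriv f x), abs_of_pos hden]
  refine mul_le_of_le_one_right (by positivity) ?_
  rw [abs_div, abs_of_pos hden, div_le_one hden, abs_le]
  constructor <;> nlinarith [sq_nonneg (f x)]

lemma continuous_deriv_div_sq_add (hf : ContDiff ℝ 1 f) (hl : 0 < l) :
    Continuous fun x ↦ deriv f x / (f x ^ 2 + l) :=
  hf.continuous_deriv_one.div₀ (by fun_prop) fun x ↦ by positivity

lemma integral_abs_deriv_regInv_comp_le (hab : a ≤ b) (hf : ContDiff ℝ 1 f) (hl : 0 < l)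
    (hf' : ∀ x ∈ Icc a b, 0 ≤ deriv f x) :
    ∫ x in a..b, |deriv (fun x ↦ regInv l (f x)) x| ≤ Real.pi / √l := by
  refine (intervalIntegral.integral_mono_on hab
    ((contDiff_regInv_comp hf hl).continuous_deriv_one.abs.intervalIntegrable _ _)
    ((continuous_deriv_div_sq_add hf hl).intervalIntegrable _ _) fun x hx ↦ ?_).trans
    (integral_deriv_div_sq_add_le hf hl)
  simpa only [abs_of_nonneg (hf' x hx)] using abs_deriv_regInv_comp_le hf hl x

lemma IsAmplitude.norm_integral_div_sq_add_mul_le (hA : IsAmplitude A a b D) (hab : a ≤ b)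
    (hl : 0 < l) (hf : ContDiff ℝ 1 f) (hf' : ∀ x ∈ Icc a b, l ≤ deriv f x) {E : ℝ → ℂ}
    (hE : ∀ x, ‖E x‖ ≤ 1) :
    ‖∫ x in a..b, ((l / (f x ^ 2 + l) : ℝ) : ℂ) * A x * E x‖ ≤ Real.pi / √l * D := by
  have hD := hA.nonneg hab
  calc ‖∫ x in a..b, ((l / (f x ^ 2 + l) : ℝ) : ℂ) * A x * E x‖
      ≤ ∫ x in a..b, deriv f x / (f x ^ 2 + l) * D := by
        refine intervalIntegral.norm_integral_le_of_norm_le hab (ae_of_all _ fun x hx ↦ ?_)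
          (((continuous_deriv_div_sq_add hf hl).mul continuous_const).intervalIntegrable _ _)
        have hx' := Ioc_subset_Icc_self hx
        have hfx := hf' x hx'
        rw [norm_mul, norm_mul, Complex.norm_real, Real.norm_of_nonneg (by positivity)]
        calc l / (f x ^ 2 + l) * ‖A x‖ * ‖E x‖
            ≤ l / (f x ^ 2 + l) * D * 1 := by
              gcongr
              exacts [hA.norm_le hx', hE x]
          _ ≤ deriv f x / (f x ^ 2 + l) * D := by
              rw [mul_one]
              gcongr
    _ ≤ Real.pi / √l * D := by
        rw [intervalIntegral.integral_mul_const]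
        gcongr
        exact integral_deriv_div_sq_add_le hf hl

lemma IsAmplitude.norm_integral_mul_e_le_of_le_deriv_deriv (hA : IsAmplitude A a b D)
    (hab : a ≤ b) (hl : 0 < l) (hF : ContDiff ℝ 2 F)
    (hFl : ∀ x ∈ Icc a b, l ≤ deriv (deriv F) x) :
    ‖∫ x in a..b, A x * e (F x)‖ ≤ 4 * D / √l := by
  have hD := hA.nonneg hab
  have hF' : ContDiff ℝ 1 (deriv F) := ((contDiff_succ_iff_deriv (n := 1)).1 hF).2.2
  have hm := contDiff_regInv_comp hF' hl
  have hmain := (hA.ofReal_mul hab hm (fun x _ ↦ abs_regInv_le hl (deriv F x))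
    (integral_abs_deriv_regInv_comp_le hab hF' hl fun x hx ↦
      hl.le.trans (hFl x hx))).norm_integral_deriv_mul_e_le hab (hF.of_le (by norm_num))
  have hrem := hA.norm_integral_div_sq_add_mul_le hab hl hF' hFl fun x ↦ (norm_e (F x)).le
  have hsplit : ∫ x in a..b, A x * e (F x) =
      (∫ x in a..b, ((deriv F x : ℝ) : ℂ) * ((regInv l (deriv F x) : ℝ) * A x) * e (F x)) +
        ∫ x in a..b, ((l / (deriv F x ^ 2 + l) : ℝ) : ℂ) * A x * e (F x) := by
    have hcA := hA.continuous
    have hcm := hm.continuous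
    have hcE : Continuous fun x ↦ e (F x) := continuous_e.comp hF.continuous
    have hcR : Continuous fun x ↦ l / (deriv F x ^ 2 + l) :=
      continuous_const.div₀ (by fun_prop) fun x ↦ by positivity
    rw [← intervalIntegral.integral_add (Continuous.intervalIntegrable (by fun_prop) _ _)
      (Continuous.intervalIntegrable (by fun_prop) _ _)]
    congr 1 with x
    have hone := congrArg (fun t : ℝ ↦ (t : ℂ)) (regInv_mul_add hl (deriv F x))
    push_cast at hone ⊢
    linear_combination -(A x * e (F x)) * hone
  have hconst : (1 + Real.pi) / (2 * Real.pi) + Real.pi ≤ 4 := by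
    have : (1 + Real.pi) / (2 * Real.pi) ≤ 17 / 25 := by
      rw [div_le_iff₀ Real.two_pi_pos]
      linarith [Real.pi_gt_three]
    linarith [Real.pi_lt_d2]
  calc ‖∫ x in a..b, A x * e (F x)‖
      ≤ (1 / √l + Real.pi / √l) * D / (2 * Real.pi) + Real.pi / √l * D :=
        hsplit ▸ (norm_add_le _ _).trans (add_le_add hmain hrem)
    _ = ((1 + Real.pi) / (2 * Real.pi) + Real.pi) * D / √l := by field_simp
    _ ≤ 4 * D / √l := by gcongr

lemma forall_le_or_forall_le_neg_of_le_abs {f : ℝ → ℝ} (hf : ContinuousOn f (Icc a b))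
    (hl : 0 < l) (hfl : ∀ x ∈ Icc a b, l ≤ |f x|) :
    (∀ x ∈ Icc a b, l ≤ f x) ∨ ∀ x ∈ Icc a b, l ≤ -f x := by
  have hne : ∀ x ∈ Icc a b, f x ≠ 0 := fun x hx ↦ abs_pos.1 (hl.trans_le (hfl x hx))
  refine (isPreconnected_Icc.mapsTo_Ioi_or_Iio hf hne).imp (fun hpos x hx ↦ ?_) fun hneg x hx ↦ ?_
  · exact abs_of_pos (mem_Ioi.1 (hpos hx)) ▸ hfl x hx
  · exact abs_of_neg (mem_Iio.1 (hneg hx)) ▸ hfl x hx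

theorem IsAmplitude.norm_integral_mul_e_le (hA : IsAmplitude A a b D) (hab : a ≤ b)
    (hl : 0 < l) (hF : ContDiff ℝ 2 F) (hFl : ∀ x ∈ Icc a b, l ≤ |deriv (deriv F) x|) :
    ‖∫ x in a..b, A x * e (F x)‖ ≤ 4 * D / √l := by
  have hF' : ContDiff ℝ 1 (deriv F) := ((contDiff_succ_iff_deriv (n := 1)).1 hF).2.2
  rcases forall_le_or_forall_le_neg_of_le_abs hF'.continuous_deriv_one.continuousOn hl hFl
    with hpos | hneg
  · exact hA.norm_integral_mul_e_le_of_le_deriv_deriv hab hl hF hpos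
  · have hconj := hA.conj.norm_integral_mul_e_le_of_le_deriv_deriv (F := fun x ↦ -F x) hab hl
      hF.neg (by simpa only [deriv.fun_neg', deriv.fun_neg] using hneg)
    simp only [← conj_e, ← map_mul, intervalIntegral.intervalIntegral_conj,
      RCLike.norm_conj] at hconj
    exact hconj

end VanDerCorput

section WeightKernel

/-- The kernel `K_u(t) = ∫ u(w) e(wt) dw` produced by averaging `e(wt)` against `u`. -/
noncomputable def weightKernel (u : ℝ → ℝ) (t : ℝ) : ℂ := ∫ w, (u w : ℂ) * e (w * t)

/-- A smooth weight on `[1, 2]` for which `C` bounds the size and the decay of the kernel. The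
decay exponent leaves a factor `1 + t ^ 2` to spare over an integrable kernel. -/
structure IsWeight (u : ℝ → ℝ) (C : ℝ) : Prop where
  contDiff : ContDiff ℝ ∞ u
  support_subset : Function.support u ⊆ Icc 1 2
  abs_le : ∀ w, |u w| ≤ C
  norm_weightKernel_le : ∀ t, ‖weightKernel u t‖ ≤ C / (1 + t ^ 2) ^ 2

variable {u : ℝ → ℝ} {C C' : ℝ}

lemma weightKernel_eq_fourier (u : ℝ → ℝ) (t : ℝ) :
    weightKernel u t = 𝓕 (fun w ↦ (u w : ℂ)) (-t) := by
  rw [Real.fourier_real_eq_integral_exp_smul, weightKernel]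
  refine integral_congr_ae (ae_of_all _ fun w ↦ ?_)
  simp only [smul_eq_mul, e]
  rw [mul_comm]
  congr 2
  push_cast
  ring

lemma weightKernel_neg (u : ℝ → ℝ) (t : ℝ) : weightKernel u (-t) = conj (weightKernel u t) := by
  simp only [weightKernel, ← integral_conj, map_mul, Complex.conj_ofReal, conj_e, mul_neg]

lemma intervalIntegral_eq_integral_of_support_subset_Icc {f : ℝ → ℂ} {a b : ℝ} (hab : a ≤ b)
    (hsupp : Function.support f ⊆ Icc a b) : ∫ x in a..b, f x = ∫ x, f x := by
  rw [intervalIntegral.integral_of_le hab, ← integral_Icc_eq_integral_Ioc,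
    setIntegral_eq_integral_of_forall_compl_eq_zero fun x hx ↦ Function.notMem_support.1
      fun h ↦ hx (hsupp h)]

lemma IsWeight.weightKernel_eq (hu : IsWeight u C) (t : ℝ) :
    weightKernel u t = ∫ w in (1 : ℝ)..2, (u w : ℂ) * e (w * t) :=
  (intervalIntegral_eq_integral_of_support_subset_Icc one_le_two fun _ hw ↦
    hu.support_subset (by simpa using left_ne_zero_of_mul hw)).symm

lemma hasCompactSupport_of_support_subset_Icc {E : Type*} [Zero E] {f : ℝ → E} {a b : ℝ}
    (hsupp : Function.support f ⊆ Icc a b) : HasCompactSupport f :=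
  HasCompactSupport.of_support_subset_isCompact isCompact_Icc hsupp

lemma integrable_ofReal_of_support_subset_Icc {a b : ℝ} (hu : Continuous u)
    (hsupp : Function.support u ⊆ Icc a b) : Integrable fun w ↦ (u w : ℂ) :=
  (hu.integrable_of_hasCompactSupport (hasCompactSupport_of_support_subset_Icc hsupp)).ofReal

lemma support_deriv_subset_Icc {a b : ℝ} (hsupp : Function.support u ⊆ Icc a b) :
    Function.support (deriv u) ⊆ Icc a b :=
  support_deriv_subset.trans (closure_minimal hsupp isClosed_Icc)

lemma weightKernel_deriv {a b : ℝ} (hu : ContDiff ℝ 1 u) (hsupp : Function.support u ⊆ Icc a b)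
    (t : ℝ) : weightKernel (deriv u) t = -(2 * Real.pi * Complex.I) * t * weightKernel u t := by
  have hderiv : (fun w ↦ ((deriv u w : ℝ) : ℂ)) = deriv fun w ↦ (u w : ℂ) :=
    funext fun w ↦ ((hu.differentiable one_ne_zero w).hasDerivAt.ofReal_comp.deriv).symm
  have hint' := integrable_ofReal_of_support_subset_Icc hu.continuous_deriv_one
    (support_deriv_subset_Icc hsupp)
  rw [weightKernel_eq_fourier, weightKernel_eq_fourier, hderiv,
    Real.fourier_deriv (integrable_ofReal_of_support_subset_Icc hu.continuous hsupp)
      (fun w ↦ (hu.differentiable one_ne_zero w).hasDerivAt.ofReal_comp.differentiableAt)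
      (hderiv ▸ hint')]
  simp

lemma hasDerivAt_weightKernel {a b : ℝ} (hu : Continuous u)
    (hsupp : Function.support u ⊆ Icc a b) (t : ℝ) :
    HasDerivAt (weightKernel u)
      (2 * Real.pi * Complex.I * weightKernel (fun w ↦ w * u w) t) t := by
  have hmul : Integrable fun w ↦ ((w * u w : ℝ) : ℂ) :=
    integrable_ofReal_of_support_subset_Icc (by fun_prop)
      ((Function.support_mul_subset_right _ _).trans hsupp)
  have hfourier := Real.hasDerivAt_fourier
    (integrable_ofReal_of_support_subset_Icc hu hsupp) (by simpa using hmul) (-t)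
  have hK : weightKernel u = fun t ↦ 𝓕 (fun w ↦ (u w : ℂ)) (-t) :=
    funext (weightKernel_eq_fourier u)
  rw [hK, weightKernel_eq_fourier]
  refine (hfourier.scomp t (hasDerivAt_neg t)).congr_deriv ?_
  rw [Real.fourier_real_eq_integral_exp_smul, Real.fourier_real_eq_integral_exp_smul,
    ← integral_const_mul, neg_one_smul, ← integral_neg]
  refine integral_congr_ae (ae_of_all _ fun w ↦ ?_)
  simp only [smul_eq_mul]
  push_cast
  ring

lemma exists_norm_weightKernel_le {a b : ℝ} (hu : ContDiff ℝ ∞ u)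
    (hsupp : Function.support u ⊆ Icc a b) :
    ∃ C, ∀ t, ‖weightKernel u t‖ ≤ C / (1 + t ^ 2) ^ 2 := by
  have hcs : HasCompactSupport fun w ↦ (u w : ℂ) :=
    (hasCompactSupport_of_support_subset_Icc hsupp).comp_left (g := ((↑) : ℝ → ℂ)) (by simp)
  let f : SchwartzMap ℝ ℂ := hcs.toSchwartzMap (Complex.ofRealCLM.contDiff.comp hu)
  have hK (t : ℝ) : weightKernel u t = (𝓕 f) (-t) := weightKernel_eq_fourier u t
  obtain ⟨C₀, -, h₀⟩ := (𝓕 f).decay 0 0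
  obtain ⟨C₄, -, h₄⟩ := (𝓕 f).decay 4 0
  refine ⟨2 * (C₀ + C₄), fun t ↦ ?_⟩
  specialize h₀ (-t)
  specialize h₄ (-t)
  simp only [pow_zero, one_mul, norm_iteratedFDeriv_zero, norm_neg, Real.norm_eq_abs,
    Even.pow_abs (by decide : Even 4)] at h₀ h₄
  rw [hK, le_div_iff₀ (by positivity)]
  calc ‖(𝓕 f) (-t)‖ * (1 + t ^ 2) ^ 2
      ≤ ‖(𝓕 f) (-t)‖ * (2 * (1 + t ^ 4)) := by
        gcongr
        nlinarith [sq_nonneg (t ^ 2 - 1)]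
    _ = 2 * (‖(𝓕 f) (-t)‖ + t ^ 4 * ‖(𝓕 f) (-t)‖) := by ring
    _ ≤ 2 * (C₀ + C₄) := by gcongr

lemma exists_isWeight (hu : ContDiff ℝ ∞ u) (hsupp : Function.support u ⊆ Icc 1 2) :
    ∃ C, IsWeight u C := by
  obtain ⟨C₁, h₁⟩ := exists_norm_weightKernel_le hu hsupp
  obtain ⟨C₂, h₂⟩ :=
    (hasCompactSupport_of_support_subset_Icc hsupp).exists_bound_of_continuous hu.continuous
  exact ⟨max C₁ C₂, hu, hsupp, fun w ↦ (h₂ w).trans (le_max_right _ _),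
    fun t ↦ (h₁ t).trans (by gcongr; exact le_max_left _ _)⟩

lemma IsWeight.continuous (hu : IsWeight u C) : Continuous u := hu.contDiff.continuous

lemma IsWeight.nonneg (hu : IsWeight u C) : 0 ≤ C := (abs_nonneg _).trans (hu.abs_le 0)

lemma IsWeight.continuous_weightKernel (hu : IsWeight u C) : Continuous (weightKernel u) :=
  continuous_iff_continuousAt.2 fun t ↦
    (hasDerivAt_weightKernel hu.continuous hu.support_subset t).continuousAt

lemma IsWeight.mono (hu : IsWeight u C) (hCC' : C ≤ C') : IsWeight u C' where
  contDiff := hu.contDiff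
  support_subset := hu.support_subset
  abs_le w := (hu.abs_le w).trans hCC'
  norm_weightKernel_le t := (hu.norm_weightKernel_le t).trans (by gcongr)

lemma exists_isWeight_deriv_id_mul (hu : ContDiff ℝ ∞ u) (hsupp : Function.support u ⊆ Icc 1 2) :
    ∃ C, IsWeight u C ∧ IsWeight (deriv u) C ∧ IsWeight (fun w ↦ w * u w) C := by
  obtain ⟨C₁, h₁⟩ := exists_isWeight hu hsupp
  obtain ⟨C₂, h₂⟩ := exists_isWeight ((contDiff_infty_iff_deriv.1 hu).2)
    (support_deriv_subset_Icc hsupp)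
  obtain ⟨C₃, h₃⟩ := exists_isWeight (contDiff_id.mul hu)
    ((Function.support_mul_subset_right _ _).trans hsupp)
  exact ⟨max C₁ (max C₂ C₃), h₁.mono (le_max_left _ _),
    h₂.mono ((le_max_left _ _).trans (le_max_right _ _)),
    h₃.mono ((le_max_right _ _).trans (le_max_right _ _))⟩

end WeightKernel

section ControlledDeriv

/-- A `C²` function on the line whose derivative is bounded above and away from zero and whose
second derivative is bounded, all in terms of the single constant `C`. -/
structure HasControlledDeriv (f : ℝ → ℝ) (C : ℝ) : Prop where
  one_le : 1 ≤ C
  contDiff : ContDiff ℝ 2 f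
  inv_le_abs_deriv : ∀ x, C⁻¹ ≤ |deriv f x|
  abs_deriv_le : ∀ x, |deriv f x| ≤ C
  abs_deriv_deriv_le : ∀ x, |deriv (deriv f) x| ≤ C

namespace HasControlledDeriv

variable {f : ℝ → ℝ} {C C' : ℝ}

lemma pos (hf : HasControlledDeriv f C) : 0 < C := one_pos.trans_le hf.one_le

lemma continuous (hf : HasControlledDeriv f C) : Continuous f := hf.contDiff.continuous

lemma differentiable (hf : HasControlledDeriv f C) : Differentiable ℝ f :=
  hf.contDiff.differentiable two_ne_zero

lemma hasDerivAt (hf : HasControlledDeriv f C) (x : ℝ) : HasDerivAt f (deriv f x) x :=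
  (hf.differentiable x).hasDerivAt

lemma contDiff_deriv (hf : HasControlledDeriv f C) : ContDiff ℝ 1 (deriv f) :=
  ((contDiff_succ_iff_deriv (n := 1)).1 hf.contDiff).2.2

lemma continuous_deriv (hf : HasControlledDeriv f C) : Continuous (deriv f) :=
  hf.contDiff_deriv.continuous

lemma hasDerivAt_deriv (hf : HasControlledDeriv f C) (x : ℝ) :
    HasDerivAt (deriv f) (deriv (deriv f) x) x :=
  (hf.contDiff_deriv.differentiable one_ne_zero x).hasDerivAt

lemma deriv_ne_zero (hf : HasControlledDeriv f C) (x : ℝ) : deriv f x ≠ 0 :=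
  abs_pos.1 ((inv_pos.2 hf.pos).trans_le (hf.inv_le_abs_deriv x))

lemma mono (hf : HasControlledDeriv f C) (hCC' : C ≤ C') : HasControlledDeriv f C' where
  one_le := hf.one_le.trans hCC'
  contDiff := hf.contDiff
  inv_le_abs_deriv x := (inv_anti₀ hf.pos hCC').trans (hf.inv_le_abs_deriv x)
  abs_deriv_le x := (hf.abs_deriv_le x).trans hCC'
  abs_deriv_deriv_le x := (hf.abs_deriv_deriv_le x).trans hCC'

lemma abs_sub_le (hf : HasControlledDeriv f C) (x y : ℝ) : |f x - f y| ≤ C * |x - y| :=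
  convex_univ.norm_image_sub_le_of_norm_deriv_le (fun z _ ↦ hf.differentiable z)
    (fun z _ ↦ hf.abs_deriv_le z) (mem_univ y) (mem_univ x)

lemma abs_deriv_sub_le (hf : HasControlledDeriv f C) (x y : ℝ) :
    |deriv f x - deriv f y| ≤ C * |x - y| :=
  convex_univ.norm_image_sub_le_of_norm_deriv_le
    (fun z _ ↦ (hf.hasDerivAt_deriv z).differentiableAt) (fun z _ ↦ hf.abs_deriv_deriv_le z)
    (mem_univ y) (mem_univ x)

lemma abs_sub_le_mul_abs_map_sub (hf : HasControlledDeriv f C) (x y : ℝ) :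
    |x - y| ≤ C * |f x - f y| := by
  wlog hxy : x < y generalizing x y
  · rcases (not_lt.1 hxy).eq_or_lt with rfl | hlt
    · simp
    · simpa only [abs_sub_comm] using this y x hlt
  obtain ⟨z, -, hz⟩ := exists_deriv_eq_slope f hxy hf.continuous.continuousOn
    hf.differentiable.differentiableOn
  have hslope : f y - f x = deriv f z * (y - x) := by
    rw [hz, div_mul_cancel₀ _ (sub_pos.2 hxy).ne']
  rw [abs_sub_comm, abs_sub_comm (f x), hslope, abs_mul, ← mul_assoc]
  refine le_mul_of_one_le_left (abs_nonneg _) ?_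
  exact (inv_le_iff_one_le_mul₀' hf.pos).1 (hf.inv_le_abs_deriv z)

lemma abs_sub_sub_deriv_mul_le (hf : HasControlledDeriv f C) (x y : ℝ) :
    |f x - f y - deriv f x * (x - y)| ≤ C * (x - y) ^ 2 := by
  have hbound : ∀ z ∈ uIcc x y, ‖deriv f z - deriv f x‖ ≤ C * |x - y| := fun z hz ↦
    (hf.abs_deriv_sub_le z x).trans
      (mul_le_mul_of_nonneg_left (abs_sub_comm x y ▸ abs_sub_left_of_mem_uIcc hz) hf.pos.le)
  have hderiv (z : ℝ) : HasDerivAt (fun z ↦ f z - deriv f x * z) (deriv f z - deriv f x) z := by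
    simpa using (hf.hasDerivAt z).fun_sub ((hasDerivAt_id z).const_mul (deriv f x))
  have hmvt := (convex_uIcc x y).norm_image_sub_le_of_norm_hasDerivWithin_le
    (fun z _ ↦ (hderiv z).hasDerivWithinAt) hbound right_mem_uIcc left_mem_uIcc
  rw [Real.norm_eq_abs, Real.norm_eq_abs, mul_assoc, ← sq, sq_abs] at hmvt
  convert hmvt using 2
  ring

lemma surjective (hf : HasControlledDeriv f C) : Function.Surjective f := by
  have hanti : AntilipschitzWith C.toNNReal f := AntilipschitzWith.of_le_mul_dist fun x y ↦ by
    simpa only [Real.coe_toNNReal C hf.pos.le, Real.dist_eq] using hf.abs_sub_le_mul_abs_map_sub x y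
  have hlip : LipschitzWith C.toNNReal f := LipschitzWith.of_dist_le_mul fun x y ↦ by
    simpa only [Real.coe_toNNReal C hf.pos.le, Real.dist_eq] using hf.abs_sub_le x y
  have hopen : IsOpenMap f := isOpenMap_of_hasStrictDerivAt
    (fun x ↦ hf.contDiff.contDiffAt.hasStrictDerivAt two_ne_zero) hf.deriv_ne_zero
  have hclopen : IsClopen (range f) :=
    ⟨(hanti.isClosedEmbedding hlip.uniformContinuous).isClosed_range, hopen.isOpen_range⟩
  exact range_eq_univ.1 (hclopen.eq_univ (range_nonempty f))

end HasControlledDeriv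

end ControlledDeriv

section KernelForm

/-- The oscillatory integral `∫ P(x) e(BwS(x)) dx` over `[1, 2]`, as a function of the frequency
`w`. -/
noncomputable def oscIntegral (B : ℝ) (S : ℝ → ℝ) (P : ℝ → ℂ) (w : ℝ) : ℂ :=
  ∫ x in (1 : ℝ)..2, P x * e (B * w * S x)

/-- The linear functional `F ↦ ∬ F(x, y) K_u(B(S(x) - S(y))) dx dy` over `[1, 2]²`. Its value at
`P(x) conj R(y)` is the average of a product of two oscillatory integrals, see
`integral_oscIntegral_mul_conj`. -/
noncomputable def kernelForm (B : ℝ) (S u : ℝ → ℝ) (F : ℝ × ℝ → ℂ) : ℂ :=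
  ∫ p in Icc (1 : ℝ) 2 ×ˢ Icc (1 : ℝ) 2, F p * weightKernel u (B * (S p.1 - S p.2))

/-- The amplitude `A` modulated by the phase `Φ`. -/
noncomputable def wave (A : ℝ → ℂ) (Φ : ℝ → ℝ) (x : ℝ) : ℂ := A x * e (Φ x)

/-- The function `(x, y) ↦ P(x) conj R(y)`. -/
noncomputable def tensor (P R : ℝ → ℂ) (p : ℝ × ℝ) : ℂ := P p.1 * conj (R p.2)

variable {B C Cu c D D₁ D₂ : ℝ} {S u Φ : ℝ → ℝ} {F G : ℝ × ℝ → ℂ} {A P R : ℝ → ℂ}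

lemma continuous_wave (hA : Continuous A) (hΦ : Continuous Φ) : Continuous (wave A Φ) :=
  hA.mul (continuous_e.comp hΦ)

lemma norm_wave (A : ℝ → ℂ) (Φ : ℝ → ℝ) (x : ℝ) : ‖wave A Φ x‖ = ‖A x‖ := by
  rw [wave, norm_mul, norm_e, mul_one]

lemma tensor_wave_mul_left (g A : ℝ → ℂ) (Φ : ℝ → ℝ) (R : ℝ → ℂ) (p : ℝ × ℝ) :
    tensor (wave (fun x ↦ g x * A x) Φ) R p = g p.1 * tensor (wave A Φ) R p := by
  simp only [tensor, wave, mul_assoc]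

lemma continuous_tensor (hP : Continuous P) (hR : Continuous R) : Continuous (tensor P R) := by
  unfold tensor
  fun_prop

lemma integrableOn_square {f : ℝ × ℝ → ℂ} (hf : Continuous f) :
    IntegrableOn f (Icc 1 2 ×ˢ Icc 1 2) :=
  hf.continuousOn.integrableOn_compact (isCompact_Icc.prod isCompact_Icc)

lemma integral_square {f : ℝ × ℝ → ℂ} (hf : Continuous f) :
    ∫ p in Icc (1 : ℝ) 2 ×ˢ Icc (1 : ℝ) 2, f p =
      ∫ x in (1 : ℝ)..2, ∫ y in (1 : ℝ)..2, f (x, y) := by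
  simp only [intervalIntegral.integral_of_le one_le_two, ← integral_Icc_eq_integral_Ioc]
  exact setIntegral_prod f (integrableOn_square hf)

lemma integral_square_symm {f : ℝ × ℝ → ℂ} (hf : Continuous f) :
    ∫ p in Icc (1 : ℝ) 2 ×ˢ Icc (1 : ℝ) 2, f p =
      ∫ y in (1 : ℝ)..2, ∫ x in (1 : ℝ)..2, f (x, y) := by
  rw [Measure.volume_eq_prod, ← setIntegral_prod_swap, ← Measure.volume_eq_prod,
    integral_square (f := fun p ↦ f p.swap) (by fun_prop)]
  simp only [Prod.swap_prod_mk]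

lemma continuous_mul_weightKernel (hS : Continuous S) (hK : Continuous (weightKernel u))
    (hF : Continuous F) :
    Continuous fun p : ℝ × ℝ ↦ F p * weightKernel u (B * (S p.1 - S p.2)) := by
  fun_prop

lemma kernelForm_add (hS : Continuous S) (hK : Continuous (weightKernel u)) (hF : Continuous F)
    (hG : Continuous G) :
    kernelForm B S u (fun p ↦ F p + G p) = kernelForm B S u F + kernelForm B S u G := by
  simp only [kernelForm, add_mul]
  exact integral_add (integrableOn_square (continuous_mul_weightKernel hS hK hF))
    (integrableOn_square (continuous_mul_weightKernel hS hK hG))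

lemma kernelForm_const_mul (c : ℂ) :
    kernelForm B S u (fun p ↦ c * F p) = c * kernelForm B S u F := by
  simp only [kernelForm, mul_assoc]
  exact integral_const_mul _ _

lemma kernelForm_sub (hS : Continuous S) (hK : Continuous (weightKernel u)) (hF : Continuous F)
    (hG : Continuous G) :
    kernelForm B S u (fun p ↦ F p - G p) = kernelForm B S u F - kernelForm B S u G := by
  simp only [kernelForm, sub_mul]
  exact integral_sub (integrableOn_square (continuous_mul_weightKernel hS hK hF))
    (integrableOn_square (continuous_mul_weightKernel hS hK hG))

lemma kernelForm_ofReal_sub_mul {f g : ℝ × ℝ → ℝ} (hS : Continuous S)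
    (hK : Continuous (weightKernel u)) (hf : Continuous f) (hg : Continuous g)
    (hF : Continuous F) :
    kernelForm B S u (fun p ↦ ((f p - g p : ℝ) : ℂ) * F p) =
      (kernelForm B S u fun p ↦ (f p : ℂ) * F p) - kernelForm B S u fun p ↦ (g p : ℂ) * F p := by
  rw [← kernelForm_sub hS hK (by fun_prop) (by fun_prop)]
  simp only [Complex.ofReal_sub, sub_mul]

lemma kernelForm_ofReal_snd_mul_tensor (B : ℝ) (S u g : ℝ → ℝ) (P R : ℝ → ℂ) :
    (kernelForm B S u fun p ↦ (g p.2 : ℂ) * tensor P R p) =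
      conj (kernelForm B S u fun p ↦ (g p.1 : ℂ) * tensor R P p) := by
  rw [kernelForm, kernelForm, ← integral_conj, Measure.volume_eq_prod,
    ← setIntegral_prod_swap]
  refine integral_congr_ae (ae_of_all _ fun p ↦ ?_)
  simp only [tensor, Prod.fst_swap, Prod.snd_swap, map_mul, Complex.conj_conj,
    Complex.conj_ofReal, ← weightKernel_neg]
  rw [mul_comm (conj (R p.1))]
  congr 2
  ring

lemma oscIntegral_mul_conj (B : ℝ) (S : ℝ → ℝ) (P R : ℝ → ℂ) (w : ℝ) :
    oscIntegral B S P w * conj (oscIntegral B S R w) =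
      ∫ p in Icc (1 : ℝ) 2 ×ˢ Icc (1 : ℝ) 2, tensor P R p * e (w * (B * (S p.1 - S p.2))) := by
  simp only [oscIntegral, intervalIntegral.integral_of_le one_le_two,
    ← integral_Icc_eq_integral_Ioc, ← integral_conj]
  rw [← setIntegral_prod_mul, Measure.volume_eq_prod]
  refine integral_congr_ae (ae_of_all _ fun p ↦ ?_)
  have hphase : w * (B * (S p.1 - S p.2)) = B * w * S p.1 + -(B * w * S p.2) := by ring
  simp only [tensor, map_mul, conj_e, hphase, e_add]
  ring

lemma integral_oscIntegral_mul_conj (hS : Continuous S) (hu : IsWeight u Cu)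
    (hP : Continuous P) (hR : Continuous R) :
    ∫ w in (1 : ℝ)..2, (u w : ℂ) * (oscIntegral B S P w * conj (oscIntegral B S R w)) =
      kernelForm B S u (tensor P R) := by
  have hcu := hu.continuous
  have hce := continuous_e
  have hcT := continuous_tensor hP hR
  have hswap := integral_integral_swap (μ := volume.restrict (Icc (1 : ℝ) 2))
    (ν := volume.restrict (Icc (1 : ℝ) 2 ×ˢ Icc (1 : ℝ) 2))
    (f := fun w p ↦ (u w : ℂ) * (tensor P R p * e (w * (B * (S p.1 - S p.2))))) (by
      rw [Measure.prod_restrict]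
      refine ContinuousOn.integrableOn_compact
        (isCompact_Icc.prod (isCompact_Icc.prod isCompact_Icc)) (Continuous.continuousOn ?_)
      unfold Function.uncurry
      fun_prop)
  simp only [integral_const_mul] at hswap
  simp only [kernelForm, hu.weightKernel_eq, oscIntegral_mul_conj,
    intervalIntegral.integral_of_le one_le_two, ← integral_Icc_eq_integral_Ioc]
  rw [hswap]
  refine integral_congr_ae (ae_of_all _ fun p ↦ ?_)
  simp only [← integral_const_mul]
  refine integral_congr_ae (ae_of_all _ fun w ↦ ?_)
  ring

lemma kernelForm_deriv_weight (hu : ContDiff ℝ 1 u) (hsupp : Function.support u ⊆ Icc 1 2)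
    (F : ℝ × ℝ → ℂ) :
    kernelForm B S (deriv u) F =
      -(2 * Real.pi * Complex.I * B) *
        kernelForm B S u fun p ↦ ((S p.1 - S p.2 : ℝ) : ℂ) * F p := by
  rw [← kernelForm_const_mul]
  simp only [kernelForm, weightKernel_deriv hu hsupp]
  refine integral_congr_ae (ae_of_all _ fun p ↦ ?_)
  push_cast
  ring

lemma norm_weightKernel_comp_le (hu : IsWeight u Cu) (hS : HasControlledDeriv S C) (x y : ℝ) :
    ‖weightKernel u (B * (S x - S y))‖ ≤ C ^ 4 * Cu / (1 + (B * (x - y)) ^ 2) ^ 2 := by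
  have hCu := hu.nonneg
  have hdist : (x - y) ^ 2 ≤ C ^ 2 * (S x - S y) ^ 2 := by
    rw [← sq_abs (x - y), ← sq_abs (S x - S y), ← mul_pow]
    gcongr
    exact hS.abs_sub_le_mul_abs_map_sub x y
  have hden : 1 + (B * (x - y)) ^ 2 ≤ C ^ 2 * (1 + (B * (S x - S y)) ^ 2) := by
    nlinarith [mul_le_mul_of_nonneg_left hdist (sq_nonneg B), one_le_pow₀ hS.one_le (n := 2)]
  refine (hu.norm_weightKernel_le _).trans ?_
  rw [div_le_div_iff₀ (by positivity) (by positivity)]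
  calc Cu * (1 + (B * (x - y)) ^ 2) ^ 2
      ≤ Cu * (C ^ 2 * (1 + (B * (S x - S y)) ^ 2)) ^ 2 := by gcongr
    _ = C ^ 4 * Cu * (1 + (B * (S x - S y)) ^ 2) ^ 2 := by ring

lemma norm_mul_tensor_mul_weightKernel_le {x y m : ℝ} (hu : IsWeight u Cu)
    (hS : HasControlledDeriv S C) (hm : |m| ≤ c * (1 + (B * (x - y)) ^ 2)) (hR : ‖R y‖ ≤ D) :
    ‖(m : ℂ) * tensor P R (x, y) * weightKernel u (B * (S x - S y))‖ ≤
      C ^ 4 * Cu * c * D * ‖P x‖ * (1 / (1 + (B * (x - y)) ^ 2)) := by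
  have hD : 0 ≤ D := (norm_nonneg _).trans hR
  rw [norm_mul, norm_mul, tensor, norm_mul, RCLike.norm_conj, Complex.norm_real, Real.norm_eq_abs]
  calc |m| * (‖P x‖ * ‖R y‖) * ‖weightKernel u (B * (S x - S y))‖
      ≤ c * (1 + (B * (x - y)) ^ 2) * (‖P x‖ * D) *
          (C ^ 4 * Cu / (1 + (B * (x - y)) ^ 2) ^ 2) := by
        gcongr
        · exact mul_nonneg ((abs_nonneg m).trans hm) (by positivity)
        · exact (abs_nonneg m).trans hm
        · exact norm_weightKernel_comp_le hu hS x y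
    _ = C ^ 4 * Cu * c * D * ‖P x‖ * (1 / (1 + (B * (x - y)) ^ 2)) := by field_simp

lemma norm_kernelForm_mul_tensor_le {μ : ℝ × ℝ → ℝ} (hB : 0 < B) (hu : IsWeight u Cu)
    (hS : HasControlledDeriv S C) (hμ : Continuous μ) (hP : Continuous P) (hR : Continuous R)
    (hμc : ∀ x y, |μ (x, y)| ≤ c * (1 + (B * (x - y)) ^ 2))
    (hP₁ : ∫ x in (1 : ℝ)..2, ‖P x‖ ≤ D₁) (hR₂ : ∀ y ∈ Icc (1 : ℝ) 2, ‖R y‖ ≤ D₂) :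
    ‖kernelForm B S u fun p ↦ (μ p : ℂ) * tensor P R p‖ ≤ 4 * C ^ 4 * Cu * c * D₁ * D₂ / B := by
  have hc : 0 ≤ c := by simpa using (abs_nonneg _).trans (hμc 0 0)
  have hD₂ : 0 ≤ D₂ := (norm_nonneg _).trans (hR₂ 1 (by norm_num))
  have hCu := hu.nonneg
  have hinner (x : ℝ) :
      ‖∫ y in (1 : ℝ)..2, (μ (x, y) : ℂ) * tensor P R (x, y) * weightKernel u (B * (S x - S y))‖ ≤
        C ^ 4 * Cu * c * D₂ * 4 / B * ‖P x‖ := by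
    have hcont : Continuous fun y ↦ 1 / (1 + (B * (x - y)) ^ 2) :=
      continuous_const.div₀ (by fun_prop) fun y ↦ by positivity
    calc _ ≤ ∫ y in (1 : ℝ)..2, C ^ 4 * Cu * c * D₂ * ‖P x‖ * (1 / (1 + (B * (x - y)) ^ 2)) :=
          intervalIntegral.norm_integral_le_of_norm_le one_le_two
            (ae_of_all _ fun y hy ↦ norm_mul_tensor_mul_weightKernel_le hu hS (hμc x y)
              (hR₂ y (Ioc_subset_Icc_self hy)))
            ((continuous_const.mul hcont).intervalIntegrable _ _)
      _ ≤ C ^ 4 * Cu * c * D₂ * ‖P x‖ * (4 / B) := by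
          rw [intervalIntegral.integral_const_mul]
          gcongr
          exact (integral_one_div_one_add_sq_le hB x).trans (by gcongr; exact Real.pi_le_four)
      _ = C ^ 4 * Cu * c * D₂ * 4 / B * ‖P x‖ := by ring
  have hcT := continuous_tensor hP hR
  rw [kernelForm, integral_square (continuous_mul_weightKernel hS.continuous
    hu.continuous_weightKernel (by fun_prop))]
  calc _ ≤ ∫ x in (1 : ℝ)..2, C ^ 4 * Cu * c * D₂ * 4 / B * ‖P x‖ :=
        intervalIntegral.norm_integral_le_of_norm_le one_le_two
          (ae_of_all _ fun x _ ↦ hinner x) (Continuous.intervalIntegrable (by fun_prop) _ _)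
    _ ≤ C ^ 4 * Cu * c * D₂ * 4 / B * D₁ := by
        rw [intervalIntegral.integral_const_mul]
        gcongr
    _ = 4 * C ^ 4 * Cu * c * D₁ * D₂ / B := by ring

lemma norm_kernelForm_tensor_le (hB : 0 < B) (hu : IsWeight u Cu) (hS : HasControlledDeriv S C)
    (hP : Continuous P) (hR : Continuous R) (hP₁ : ∫ x in (1 : ℝ)..2, ‖P x‖ ≤ D₁)
    (hR₂ : ∀ y ∈ Icc (1 : ℝ) 2, ‖R y‖ ≤ D₂) :
    ‖kernelForm B S u (tensor P R)‖ ≤ 4 * C ^ 4 * Cu * D₁ * D₂ / B := by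
  simpa using norm_kernelForm_mul_tensor_le (μ := fun _ ↦ 1) (c := 1) hB hu hS continuous_const hP
    hR (fun x y ↦ by simpa using sq_nonneg (B * (x - y))) hP₁ hR₂

end KernelForm

section IntegrationByParts

variable {B Cu D : ℝ} {S u Φ : ℝ → ℝ} {A R : ℝ → ℂ}

lemma hasDerivAt_tensor_wave_mul_weightKernel (hA : ContDiff ℝ 1 A) (hΦ : ContDiff ℝ 1 Φ)
    (hS : ContDiff ℝ 1 S) (hu : IsWeight u Cu) (R : ℝ → ℂ) (x y : ℝ) :
    HasDerivAt (fun x ↦ tensor (wave A Φ) R (x, y) * weightKernel u (B * (S x - S y)))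
      (tensor (wave (deriv A) Φ) R (x, y) * weightKernel u (B * (S x - S y)) +
        2 * Real.pi * Complex.I *
        (tensor (wave (fun x ↦ ((deriv Φ x : ℝ) : ℂ) * A x) Φ) R (x, y) *
            weightKernel u (B * (S x - S y)) +
          B * (tensor (wave (fun x ↦ ((deriv S x : ℝ) : ℂ) * A x) Φ) R (x, y) *
            weightKernel (fun w ↦ w * u w) (B * (S x - S y))))) x := by
  have hK := (hasDerivAt_weightKernel hu.continuous hu.support_subset (B * (S x - S y))).scomp x
    (((hS.differentiable one_ne_zero x).hasDerivAt.sub_const (S y)).const_mul B)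
  have hwave := (hA.differentiable one_ne_zero x).hasDerivAt.mul
    (hasDerivAt_e_comp (hΦ.differentiable one_ne_zero x).hasDerivAt)
  refine ((hwave.mul_const (conj (R y))).mul hK).congr_deriv ?_
  simp only [tensor, wave, Pi.mul_apply, Function.comp_apply, Complex.real_smul]
  push_cast
  ring

lemma kernelForm_tensor_wave_deriv (hA : IsAmplitude A 1 2 D) (hΦ : ContDiff ℝ 1 Φ)
    (hS : ContDiff ℝ 1 S) (hu : IsWeight u Cu) (hwu : IsWeight (fun w ↦ w * u w) Cu)
    (hR : Continuous R) :
    kernelForm B S u (tensor (wave (deriv A) Φ) R) =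
      -(2 * Real.pi * Complex.I *
        (kernelForm B S u (tensor (wave (fun x ↦ ((deriv Φ x : ℝ) : ℂ) * A x) Φ) R) +
          B * kernelForm B S (fun w ↦ w * u w)
            (tensor (wave (fun x ↦ ((deriv S x : ℝ) : ℂ) * A x) Φ) R))) := by
  have hcA := hA.continuous
  have hc {f : ℝ → ℂ} (hf : Continuous f) {v : ℝ → ℝ} (hv : IsWeight v Cu) :
      Continuous fun p : ℝ × ℝ ↦ tensor (wave f Φ) R p * weightKernel v (B * (S p.1 - S p.2)) :=
    continuous_mul_weightKernel hS.continuous hv.continuous_weightKernel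
      (continuous_tensor (continuous_wave hf hΦ.continuous) hR)
  have hcA' := hc hA.continuous_deriv hu
  have hcΦ := hc (f := fun x ↦ ((deriv Φ x : ℝ) : ℂ) * A x) (by fun_prop) hu
  have hcS := hc (f := fun x ↦ ((deriv S x : ℝ) : ℂ) * A x) (by fun_prop) hwu
  refine eq_neg_of_add_eq_zero_left ?_
  rw [kernelForm, kernelForm, kernelForm, ← integral_const_mul,
    ← integral_add (integrableOn_square hcΦ) ((integrableOn_square hcS).const_mul _),
    ← integral_const_mul, ← integral_add (integrableOn_square hcA')
      (integrableOn_square (by fun_prop)), integral_square_symm (by fun_prop),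
    intervalIntegral.integral_congr (g := fun _ ↦ 0) fun y _ ↦ ?_, intervalIntegral.integral_zero]
  refine (intervalIntegral.integral_eq_sub_of_hasDerivAt
    (fun x _ ↦ hasDerivAt_tensor_wave_mul_weightKernel hA.contDiff hΦ hS hu R x y)
    (Continuous.intervalIntegrable ?_ _ _)).trans ?_
  · have hpair : Continuous fun x : ℝ ↦ (x, y) := by fun_prop
    exact (hcA'.comp hpair).add (continuous_const.mul
      ((hcΦ.comp hpair).add (continuous_const.mul (hcS.comp hpair))))
  · simp [tensor, wave, hA.left_eq_zero, hA.right_eq_zero]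

end IntegrationByParts

section ControlledFactor

/-- A nonvanishing `C¹` function on the line that is bounded above and away from zero and has
bounded derivative, all in terms of the single constant `C`. -/
structure IsControlledFactor (g : ℝ → ℝ) (C : ℝ) : Prop where
  one_le : 1 ≤ C
  contDiff : ContDiff ℝ 1 g
  inv_le_abs : ∀ x, C⁻¹ ≤ |g x|
  abs_le : ∀ x, |g x| ≤ C
  abs_deriv_le : ∀ x, |deriv g x| ≤ C

/-- The divided difference `(f x - f ξ) / (x - ξ)`, as an integral that makes sense for `x = ξ`
and is visibly as smooth as `f'`. -/
noncomputable def dividedDiff (f : ℝ → ℝ) (ξ x : ℝ) : ℝ :=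
  ∫ θ in (0 : ℝ)..1, deriv f (ξ + θ * (x - ξ))

variable {A : ℝ → ℂ} {f g h : ℝ → ℝ} {C D a b : ℝ}

namespace HasControlledDeriv

lemma isControlledFactor_deriv (hf : HasControlledDeriv f C) :
    IsControlledFactor (deriv f) C where
  one_le := hf.one_le
  contDiff := hf.contDiff_deriv
  inv_le_abs := hf.inv_le_abs_deriv
  abs_le := hf.abs_deriv_le
  abs_deriv_le := hf.abs_deriv_deriv_le

lemma sub_eq_mul_dividedDiff (hf : HasControlledDeriv f C) (ξ x : ℝ) :
    f x - f ξ = (x - ξ) * dividedDiff f ξ x := by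
  have hderiv (θ : ℝ) : HasDerivAt (fun θ ↦ f (ξ + θ * (x - ξ)))
      ((x - ξ) * deriv f (ξ + θ * (x - ξ))) θ := by
    have hline : HasDerivAt (fun θ ↦ ξ + θ * (x - ξ)) (x - ξ) θ := by
      simpa using ((hasDerivAt_id θ).mul_const (x - ξ)).const_add ξ
    exact ((hf.hasDerivAt _).comp θ hline).congr_deriv (mul_comm _ _)
  have hcf' := hf.continuous_deriv
  rw [dividedDiff, ← intervalIntegral.integral_const_mul,
    intervalIntegral.integral_eq_sub_of_hasDerivAt (fun θ _ ↦ hderiv θ)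
      (Continuous.intervalIntegrable (by fun_prop) _ _)]
  simp

lemma norm_mul_deriv_deriv_le (hf : HasControlledDeriv f C) {θ : ℝ} (hθ : θ ∈ uIoc 0 1)
    (x : ℝ) : ‖θ * deriv (deriv f) x‖ ≤ C := by
  rw [uIoc_of_le zero_le_one] at hθ
  rw [norm_mul, Real.norm_of_nonneg hθ.1.le]
  exact (mul_le_of_le_one_left (norm_nonneg _) hθ.2).trans (hf.abs_deriv_deriv_le x)

lemma hasDerivAt_dividedDiff (hf : HasControlledDeriv f C) (ξ x : ℝ) :
    HasDerivAt (dividedDiff f ξ) (∫ θ in (0 : ℝ)..1, θ * deriv (deriv f) (ξ + θ * (x - ξ))) x := by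
  have hcf' := hf.continuous_deriv
  have hcf'' := hf.contDiff_deriv.continuous_deriv_one
  refine (intervalIntegral.hasDerivAt_integral_of_dominated_loc_of_deriv_le
    (F := fun x θ ↦ deriv f (ξ + θ * (x - ξ)))
    (F' := fun x θ ↦ θ * deriv (deriv f) (ξ + θ * (x - ξ))) (bound := fun _ ↦ C)
    Filter.univ_mem (Filter.Eventually.of_forall fun y ↦ Continuous.aestronglyMeasurable
      (by fun_prop)) (Continuous.intervalIntegrable (by fun_prop) _ _)
    (Continuous.aestronglyMeasurable (by fun_prop)) (ae_of_all _ fun θ hθ y _ ↦ ?_)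
    intervalIntegrable_const (ae_of_all _ fun θ _ y _ ↦ ?_)).2
  · exact hf.norm_mul_deriv_deriv_le hθ _
  · have hline : HasDerivAt (fun y ↦ ξ + θ * (y - ξ)) θ y := by
      simpa using (((hasDerivAt_id y).sub_const ξ).const_mul θ).const_add ξ
    exact ((hf.hasDerivAt_deriv _).comp y hline).congr_deriv (mul_comm _ _)

lemma contDiff_dividedDiff (hf : HasControlledDeriv f C) (ξ : ℝ) :
    ContDiff ℝ 1 (dividedDiff f ξ) := by
  have hcf'' := hf.contDiff_deriv.continuous_deriv_one
  refine contDiff_one_iff_deriv.2 ⟨fun x ↦ (hf.hasDerivAt_dividedDiff ξ x).differentiableAt, ?_⟩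
  rw [funext fun x ↦ (hf.hasDerivAt_dividedDiff ξ x).deriv]
  exact intervalIntegral.continuous_parametric_intervalIntegral_of_continuous'
    (by unfold Function.uncurry; fun_prop) 0 1

lemma inv_le_abs_dividedDiff (hf : HasControlledDeriv f C) (ξ x : ℝ) :
    C⁻¹ ≤ |dividedDiff f ξ x| := by
  rcases eq_or_ne x ξ with rfl | hne
  · simpa [dividedDiff] using hf.inv_le_abs_deriv x
  · have hpos : 0 < |x - ξ| := abs_pos.2 (sub_ne_zero.2 hne)
    have hdist := hf.abs_sub_le_mul_abs_map_sub x ξ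
    rw [hf.sub_eq_mul_dividedDiff, abs_mul] at hdist
    exact (inv_le_iff_one_le_mul₀' hf.pos).2 (by nlinarith)

lemma isControlledFactor_dividedDiff (hf : HasControlledDeriv f C) (ξ : ℝ) :
    IsControlledFactor (dividedDiff f ξ) C where
  one_le := hf.one_le
  contDiff := hf.contDiff_dividedDiff ξ
  inv_le_abs := hf.inv_le_abs_dividedDiff ξ
  abs_le x := by
    have hnorm : ‖dividedDiff f ξ x‖ ≤ C * |1 - 0| :=
      intervalIntegral.norm_integral_le_of_norm_le_const fun θ _ ↦ hf.abs_deriv_le _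
    simpa using hnorm
  abs_deriv_le x := by
    rw [(hf.hasDerivAt_dividedDiff ξ x).deriv]
    have hnorm : ‖∫ θ in (0 : ℝ)..1, θ * deriv (deriv f) (ξ + θ * (x - ξ))‖ ≤ C * |1 - 0| :=
      intervalIntegral.norm_integral_le_of_norm_le_const fun θ hθ ↦
        hf.norm_mul_deriv_deriv_le hθ _
    simpa using hnorm

end HasControlledDeriv

lemma IsControlledFactor.ne_zero (hg : IsControlledFactor g C) (x : ℝ) : g x ≠ 0 :=
  abs_pos.1 ((inv_pos.2 (one_pos.trans_le hg.one_le)).trans_le (hg.inv_le_abs x))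

lemma IsControlledFactor.abs_div_le (hg : IsControlledFactor g C) (hh : IsControlledFactor h C)
    (x : ℝ) : |g x / h x| ≤ C ^ 2 := by
  have hC : 0 < C := one_pos.trans_le hg.one_le
  rw [abs_div, div_eq_mul_inv, sq]
  gcongr
  exacts [hg.abs_le x, inv_le_of_inv_le₀ hC (hh.inv_le_abs x)]

lemma IsControlledFactor.abs_deriv_div_le (hg : IsControlledFactor g C)
    (hh : IsControlledFactor h C) (x : ℝ) : |deriv (fun x ↦ g x / h x) x| ≤ 2 * C ^ 4 := by
  have hC : 0 < C := one_pos.trans_le hg.one_le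
  have hderiv := ((hg.contDiff.differentiable one_ne_zero x).hasDerivAt.fun_div
    (hh.contDiff.differentiable one_ne_zero x).hasDerivAt (hh.ne_zero x)).deriv
  rw [hderiv, abs_div, div_eq_mul_inv, abs_pow, ← inv_pow]
  have hinv : |h x|⁻¹ ≤ C := inv_le_of_inv_le₀ hC (hh.inv_le_abs x)
  calc |deriv g x * h x - g x * deriv h x| * |h x|⁻¹ ^ 2
      ≤ (|deriv g x| * |h x| + |g x| * |deriv h x|) * |h x|⁻¹ ^ 2 := by
        gcongr
        simpa only [abs_mul] using abs_sub (deriv g x * h x) (g x * deriv h x)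
    _ ≤ (C * C + C * C) * C ^ 2 := by
        gcongr
        exacts [hg.abs_deriv_le x, hh.abs_le x, hg.abs_le x, hh.abs_deriv_le x]
    _ = 2 * C ^ 4 := by ring

lemma IsAmplitude.ofReal_mul_of_abs_deriv_le {M M' : ℝ} (hA : IsAmplitude A 1 2 D)
    (hg : ContDiff ℝ 1 g) (hM : ∀ x, |g x| ≤ M) (hM' : ∀ x, |deriv g x| ≤ M') :
    IsAmplitude (fun x ↦ (g x : ℂ) * A x) 1 2 ((M + M') * D) := by
  refine hA.ofReal_mul one_le_two hg (fun x _ ↦ hM x) ?_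
  refine (intervalIntegral.integral_mono_on one_le_two
    (Continuous.intervalIntegrable (by fun_prop) _ _)
    (intervalIntegrable_const (c := M')) fun x _ ↦ hM' x).trans_eq ?_
  norm_num

lemma IsAmplitude.controlledFactor_mul (hA : IsAmplitude A 1 2 D) (hg : IsControlledFactor g C) :
    IsAmplitude (fun x ↦ (g x : ℂ) * A x) 1 2 (2 * C * D) := by
  simpa only [two_mul] using hA.ofReal_mul_of_abs_deriv_le hg.contDiff hg.abs_le hg.abs_deriv_le

lemma IsAmplitude.mono {D' : ℝ} (hA : IsAmplitude A a b D) (hD : D ≤ D') :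
    IsAmplitude A a b D' :=
  ⟨hA.contDiff, hA.left_eq_zero, hA.right_eq_zero, hA.integral_norm_deriv_le.trans hD⟩

lemma IsAmplitude.controlledFactor_div_mul (hA : IsAmplitude A 1 2 D)
    (hg : IsControlledFactor g C) (hh : IsControlledFactor h C) :
    IsAmplitude (fun x ↦ ((g x / h x : ℝ) : ℂ) * A x) 1 2 (3 * C ^ 4 * D) := by
  refine (hA.ofReal_mul_of_abs_deriv_le (hg.contDiff.div hh.contDiff hh.ne_zero)
    (hg.abs_div_le hh) (hg.abs_deriv_div_le hh)).mono ?_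
  have hpow : C ^ 2 ≤ C ^ 4 := pow_le_pow_right₀ hg.one_le (by norm_num)
  nlinarith [hA.nonneg one_le_two]

end ControlledFactor

section StationaryPhase

/-- A pair of functions whose derivatives of the orders that matter are controlled by `C`:
the phase `φ` through its second and third derivatives, the frequency profile `S` through its first
two. -/
structure IsPhasePair (φ S : ℝ → ℝ) (C : ℝ) : Prop where
  differentiable : Differentiable ℝ φ
  controlled_deriv : HasControlledDeriv (deriv φ) C
  controlled : HasControlledDeriv S C

/-- The phase `Tφ(x) - ax`. -/
def tiltedPhase (φ : ℝ → ℝ) (T a x : ℝ) : ℝ := T * φ x - a * x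

variable {φ S u : ℝ → ℝ} {A A₁ A₂ P R : ℝ → ℂ} {B C Cu c D D₁ D₂ T a a₁ a₂ w : ℝ}

lemma IsAmplitude.integral_norm_le (hA : IsAmplitude A 1 2 D) :
    ∫ x in (1 : ℝ)..2, ‖A x‖ ≤ D := by
  refine (intervalIntegral.integral_mono_on one_le_two
    (hA.continuous.norm.intervalIntegrable _ _) (intervalIntegrable_const (c := D))
    fun x hx ↦ hA.norm_le hx).trans_eq ?_
  norm_num

namespace IsPhasePair

lemma hasDerivAt_tiltedPhase (h : IsPhasePair φ S C) (T a x : ℝ) :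
    HasDerivAt (tiltedPhase φ T a) (T * deriv φ x - a) x := by
  refine (((h.differentiable x).hasDerivAt.const_mul T).fun_sub
    ((hasDerivAt_id x).const_mul a)).congr_deriv ?_
  rw [mul_one]

lemma deriv_tiltedPhase (h : IsPhasePair φ S C) (T a x : ℝ) :
    deriv (tiltedPhase φ T a) x = T * deriv φ x - a :=
  (h.hasDerivAt_tiltedPhase T a x).deriv

lemma contDiff_phase (h : IsPhasePair φ S C) : ContDiff ℝ 2 φ :=
  (contDiff_succ_iff_deriv (n := 1)).2
    ⟨h.differentiable, by simp, h.controlled_deriv.contDiff.of_le one_le_two⟩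

lemma contDiff_tiltedPhase (h : IsPhasePair φ S C) (T a : ℝ) :
    ContDiff ℝ 2 (tiltedPhase φ T a) := by
  have hφ := h.contDiff_phase
  unfold tiltedPhase
  fun_prop

lemma continuous_wave (h : IsPhasePair φ S C) (hA : Continuous A) (T a : ℝ) :
    Continuous (wave A (tiltedPhase φ T a)) :=
  _root_.continuous_wave hA (h.contDiff_tiltedPhase T a).continuous

lemma norm_oscIntegral_wave_le (h : IsPhasePair φ S C) (hA : IsAmplitude A 1 2 D) (hT : 0 < T)
    (hB : 0 < B) (hBT : 4 * C ^ 2 * B ≤ T) (hw : w ∈ Icc (1 : ℝ) 2) :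
    ‖oscIntegral B S (wave A (tiltedPhase φ T a)) w‖ ≤ 4 * D / √(T / (2 * C)) := by
  have hC := h.controlled.pos
  have hderiv (x : ℝ) : deriv (fun x ↦ tiltedPhase φ T a x + B * w * S x) x =
      T * deriv φ x - a + B * w * deriv S x :=
    ((h.hasDerivAt_tiltedPhase T a x).add ((h.controlled.hasDerivAt x).const_mul (B * w))).deriv
  have hderiv₂ (x : ℝ) :
      deriv (deriv fun x ↦ tiltedPhase φ T a x + B * w * S x) x =
        T * deriv (deriv φ) x + B * w * deriv (deriv S) x := by
    rw [funext hderiv]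
    exact ((((h.controlled_deriv.hasDerivAt x).const_mul T).sub_const a).add
      ((h.controlled.hasDerivAt_deriv x).const_mul (B * w))).deriv
  have hcurv (x : ℝ) : T / (2 * C) ≤ |T * deriv (deriv φ) x + B * w * deriv (deriv S) x| := by
    have hmain : T / C ≤ |T * deriv (deriv φ) x| := by
      rw [abs_mul, abs_of_pos hT, div_eq_mul_inv]
      gcongr
      exact h.controlled_deriv.inv_le_abs_deriv x
    have hpert : |B * w * deriv (deriv S) x| ≤ T / (2 * C) := by
      rw [abs_mul, abs_of_nonneg (mul_nonneg hB.le (zero_le_one.trans hw.1))]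
      calc B * w * |deriv (deriv S) x| ≤ B * 2 * C := by
            gcongr
            exacts [hw.2, h.controlled.abs_deriv_deriv_le x]
        _ ≤ T / (2 * C) := by
            rw [le_div_iff₀ (by positivity)]
            linarith
    have hhalf : T / C = T / (2 * C) + T / (2 * C) := by
      field_simp
      norm_num
    linarith [abs_sub_abs_le_abs_add (T * deriv (deriv φ) x) (B * w * deriv (deriv S) x)]
  have hF : ContDiff ℝ 2 fun x ↦ tiltedPhase φ T a x + B * w * S x :=
    (h.contDiff_tiltedPhase T a).add (contDiff_const.mul h.controlled.contDiff)
  simpa only [oscIntegral, wave, mul_assoc, ← e_add] using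
    hA.norm_integral_mul_e_le one_le_two (by positivity) hF fun x _ ↦ by
      simpa only [hderiv₂] using hcurv x

lemma norm_kernelForm_le_of_le (h : IsPhasePair φ S C) (hu : IsWeight u Cu)
    (hA₁ : IsAmplitude A₁ 1 2 D₁) (hA₂ : IsAmplitude A₂ 1 2 D₂) (hT : 0 < T) (hB : 0 < B)
    (hBT : 4 * C ^ 2 * B ≤ T) :
    ‖kernelForm B S u (tensor (wave A₁ (tiltedPhase φ T a₁)) (wave A₂ (tiltedPhase φ T a₂)))‖ ≤
      32 * C * Cu * D₁ * D₂ / T := by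
  have hC := h.controlled.pos
  have hCu := hu.nonneg
  have hD₁ := hA₁.nonneg one_le_two
  rw [← integral_oscIntegral_mul_conj h.controlled.continuous hu
    (h.continuous_wave hA₁.continuous T a₁) (h.continuous_wave hA₂.continuous T a₂)]
  have hpoint : ∀ w ∈ uIoc (1 : ℝ) 2, ‖(u w : ℂ) *
      (oscIntegral B S (wave A₁ (tiltedPhase φ T a₁)) w *
        conj (oscIntegral B S (wave A₂ (tiltedPhase φ T a₂)) w))‖ ≤
      Cu * (4 * D₁ / √(T / (2 * C)) * (4 * D₂ / √(T / (2 * C)))) := fun w hw ↦ by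
    have hw' : w ∈ Icc (1 : ℝ) 2 := by
      rw [uIoc_of_le one_le_two] at hw
      exact Ioc_subset_Icc_self hw
    rw [norm_mul, norm_mul, RCLike.norm_conj, Complex.norm_real]
    gcongr
    exacts [hu.abs_le w, h.norm_oscIntegral_wave_le hA₁ hT hB hBT hw',
      h.norm_oscIntegral_wave_le hA₂ hT hB hBT hw']
  refine (intervalIntegral.norm_integral_le_of_norm_le_const hpoint).trans_eq ?_
  rw [div_mul_div_comm, Real.mul_self_sqrt (by positivity), show |(2 : ℝ) - 1| = 1 by norm_num]
  field_simp
  ring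

lemma norm_kernelForm_mul_le (h : IsPhasePair φ S C) (hu : IsWeight u Cu)
    (hA₁ : IsAmplitude A₁ 1 2 D₁) (hA₂ : IsAmplitude A₂ 1 2 D₂) (hB : 0 < B) {μ : ℝ × ℝ → ℝ}
    (hμ : Continuous μ) (hμc : ∀ x y, |μ (x, y)| ≤ c * (1 + (B * (x - y)) ^ 2)) (T a₁ a₂ : ℝ) :
    ‖kernelForm B S u fun p ↦ (μ p : ℂ) *
        tensor (wave A₁ (tiltedPhase φ T a₁)) (wave A₂ (tiltedPhase φ T a₂)) p‖ ≤
      4 * C ^ 4 * Cu * c * D₁ * D₂ / B := by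
  refine norm_kernelForm_mul_tensor_le hB hu h.controlled hμ (h.continuous_wave hA₁.continuous _ _)
    (h.continuous_wave hA₂.continuous _ _) hμc ?_ fun y hy ↦ ?_
  · simpa only [norm_wave] using hA₁.integral_norm_le
  · simpa only [norm_wave] using hA₂.norm_le hy

lemma norm_kernelForm_le (h : IsPhasePair φ S C) (hu : IsWeight u Cu)
    (hA₁ : IsAmplitude A₁ 1 2 D₁) (hA₂ : IsAmplitude A₂ 1 2 D₂) (hT : 0 < T) (hB : 0 < B)
    (a₁ a₂ : ℝ) :
    ‖kernelForm B S u (tensor (wave A₁ (tiltedPhase φ T a₁)) (wave A₂ (tiltedPhase φ T a₂)))‖ ≤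
      32 * C ^ 6 * Cu * D₁ * D₂ / T := by
  have hC := h.controlled.one_le
  have hCu := hu.nonneg
  have hD₁ := hA₁.nonneg one_le_two
  have hD₂ := hA₂.nonneg one_le_two
  rcases le_or_gt (4 * C ^ 2 * B) T with hBT | hTB
  · refine (h.norm_kernelForm_le_of_le hu hA₁ hA₂ hT hB hBT).trans ?_
    gcongr
    exact le_self_pow₀ hC (by norm_num)
  · have hμ := h.norm_kernelForm_mul_le hu hA₁ hA₂ hB (μ := fun _ ↦ 1) (c := 1) continuous_const
      (fun x y ↦ by simpa using sq_nonneg (B * (x - y))) T a₁ a₂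
    simp only [Complex.ofReal_one, one_mul, mul_one] at hμ
    refine hμ.trans ?_
    rw [div_le_div_iff₀ hB hT]
    calc 4 * C ^ 4 * Cu * D₁ * D₂ * T ≤ 4 * C ^ 4 * Cu * D₁ * D₂ * (4 * C ^ 2 * B) := by gcongr
      _ = 16 * (C ^ 6 * Cu * D₁ * D₂ * B) := by ring
      _ ≤ 32 * (C ^ 6 * Cu * D₁ * D₂ * B) := by
          gcongr
          norm_num
      _ = 32 * C ^ 6 * Cu * D₁ * D₂ * B := by ring

lemma norm_kernelForm_deriv_left_add_le (h : IsPhasePair φ S C) (hu : IsWeight u Cu)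
    (hwu : IsWeight (fun w ↦ w * u w) Cu) (hA : IsAmplitude A 1 2 D₁) (hB : 0 < B)
    (hR : Continuous R) (hR₂ : ∀ y ∈ Icc (1 : ℝ) 2, ‖R y‖ ≤ D₂) (T a : ℝ) :
    ‖(kernelForm B S u fun p ↦ ((T * deriv φ p.1 - a : ℝ) : ℂ) *
          tensor (wave A (tiltedPhase φ T a)) R p) +
        B * kernelForm B S (fun w ↦ w * u w) fun p ↦ ((deriv S p.1 : ℝ) : ℂ) *
          tensor (wave A (tiltedPhase φ T a)) R p‖ ≤
      4 * C ^ 4 * Cu * D₁ * D₂ / B := by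
  have hparts := kernelForm_tensor_wave_deriv (B := B) hA
    ((h.contDiff_tiltedPhase T a).of_le one_le_two) (h.controlled.contDiff.of_le one_le_two) hu
    hwu hR
  simp only [h.deriv_tiltedPhase, funext (tensor_wave_mul_left _ _ _ _)] at hparts
  have hbound := norm_kernelForm_tensor_le (P := wave (deriv A) (tiltedPhase φ T a)) hB hu
    h.controlled (h.continuous_wave hA.continuous_deriv T a) hR
    (by simpa only [norm_wave] using hA.integral_norm_deriv_le) hR₂
  have hpi : (1 : ℝ) ≤ ‖2 * (Real.pi : ℂ) * Complex.I‖ := by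
    simp only [norm_mul, Complex.norm_I, mul_one, Complex.norm_real, Complex.norm_ofNat,
      Real.norm_of_nonneg Real.pi_pos.le]
    linarith [Real.pi_gt_three]
  rw [hparts, norm_neg, norm_mul] at hbound
  exact (le_mul_of_one_le_left (norm_nonneg _) hpi).trans hbound

lemma norm_kernelForm_deriv_right_add_le (h : IsPhasePair φ S C) (hu : IsWeight u Cu)
    (hwu : IsWeight (fun w ↦ w * u w) Cu) (hA : IsAmplitude A 1 2 D₁) (hB : 0 < B)
    (hP : Continuous P) (hP₂ : ∀ x ∈ Icc (1 : ℝ) 2, ‖P x‖ ≤ D₂) (T a : ℝ) :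
    ‖(kernelForm B S u fun p ↦ ((T * deriv φ p.2 - a : ℝ) : ℂ) *
          tensor P (wave A (tiltedPhase φ T a)) p) +
        B * kernelForm B S (fun w ↦ w * u w) fun p ↦ ((deriv S p.2 : ℝ) : ℂ) *
          tensor P (wave A (tiltedPhase φ T a)) p‖ ≤
      4 * C ^ 4 * Cu * D₁ * D₂ / B := by
  rw [kernelForm_ofReal_snd_mul_tensor B S u fun x ↦ T * deriv φ x - a,
    kernelForm_ofReal_snd_mul_tensor B S _ (deriv S), ← Complex.conj_ofReal B, ← map_mul,
    ← map_add, RCLike.norm_conj]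
  exact h.norm_kernelForm_deriv_left_add_le hu hwu hA hB hP hP₂ T a

lemma norm_kernelForm_deriv_sub_mul_le (h : IsPhasePair φ S C) (hu : IsWeight u Cu)
    (hA₁ : IsAmplitude A₁ 1 2 D₁) (hA₂ : IsAmplitude A₂ 1 2 D₂) (hB : 0 < B) (T a₁ a₂ : ℝ) :
    B * ‖kernelForm B S u fun p ↦ ((deriv S p.1 - deriv S p.2 : ℝ) : ℂ) *
        tensor (wave A₁ (tiltedPhase φ T a₁)) (wave A₂ (tiltedPhase φ T a₂)) p‖ ≤
      4 * C ^ 5 * Cu * D₁ * D₂ / B := by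
  have hcS' := h.controlled.continuous_deriv
  have hdist (x y : ℝ) : |deriv S x - deriv S y| ≤ C / B * (1 + (B * (x - y)) ^ 2) := by
    have hB' : |B * (x - y)| = B * |x - y| := by rw [abs_mul, abs_of_pos hB]
    calc |deriv S x - deriv S y| ≤ C * |x - y| := h.controlled.abs_deriv_sub_le x y
      _ = C / B * |B * (x - y)| := by
          rw [hB']
          field_simp
      _ ≤ C / B * (1 + (B * (x - y)) ^ 2) := by
          have hC := h.controlled.pos
          gcongr
          nlinarith [sq_nonneg (|B * (x - y)| - 1), sq_abs (B * (x - y))]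
  calc _ ≤ B * (4 * C ^ 4 * Cu * (C / B) * D₁ * D₂ / B) := by
        gcongr
        exact h.norm_kernelForm_mul_le hu hA₁ hA₂ hB (by fun_prop) hdist T a₁ a₂
    _ = 4 * C ^ 5 * Cu * D₁ * D₂ / B := by
        field_simp

lemma kernelForm_deriv_tiltedPhase_sub (h : IsPhasePair φ S C) (hu : IsWeight u Cu)
    (T a₁ a₂ : ℝ) {F : ℝ × ℝ → ℂ} (hF : Continuous F) :
    (kernelForm B S u fun p ↦ ((T * deriv φ p.1 - a₁ : ℝ) : ℂ) * F p) -
        (kernelForm B S u fun p ↦ ((T * deriv φ p.2 - a₂ : ℝ) : ℂ) * F p) =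
      T * (kernelForm B S u fun p ↦ ((deriv φ p.1 - deriv φ p.2 : ℝ) : ℂ) * F p) -
        ((a₁ - a₂ : ℝ) : ℂ) * kernelForm B S u F := by
  have hcS := h.controlled.continuous
  have hcφ' := h.controlled_deriv.continuous
  have hcK := hu.continuous_weightKernel
  rw [← kernelForm_const_mul, ← kernelForm_const_mul,
    ← kernelForm_sub hcS hcK (by fun_prop) (by fun_prop),
    ← kernelForm_sub hcS hcK (by fun_prop) (by fun_prop)]
  congr 1 with p
  push_cast
  ring

lemma sub_mul_kernelForm_eq (h : IsPhasePair φ S C) (hu : IsWeight u Cu)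
    (hwu : IsWeight (fun w ↦ w * u w) Cu) (T a₁ a₂ : ℝ) {F : ℝ × ℝ → ℂ} (hF : Continuous F) :
    ((a₁ - a₂ : ℝ) : ℂ) * kernelForm B S u F =
      T * (kernelForm B S u fun p ↦ ((deriv φ p.1 - deriv φ p.2 : ℝ) : ℂ) * F p) +
        B * (kernelForm B S (fun w ↦ w * u w) fun p ↦
          ((deriv S p.1 - deriv S p.2 : ℝ) : ℂ) * F p) -
        ((kernelForm B S u fun p ↦ ((T * deriv φ p.1 - a₁ : ℝ) : ℂ) * F p) +
          B * kernelForm B S (fun w ↦ w * u w) fun p ↦ ((deriv S p.1 : ℝ) : ℂ) * F p) +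
        ((kernelForm B S u fun p ↦ ((T * deriv φ p.2 - a₂ : ℝ) : ℂ) * F p) +
          B * kernelForm B S (fun w ↦ w * u w) fun p ↦ ((deriv S p.2 : ℝ) : ℂ) * F p) := by
  have hcS' := h.controlled.continuous_deriv
  rw [kernelForm_ofReal_sub_mul (f := fun p ↦ deriv S p.1) (g := fun p ↦ deriv S p.2)
    h.controlled.continuous hwu.continuous_weightKernel (by fun_prop) (by fun_prop) hF]
  linear_combination h.kernelForm_deriv_tiltedPhase_sub (B := B) hu T a₁ a₂ hF

/-- Since `Φ₁'(x) - Φ₂'(y) = T(φ'(x) - φ'(y)) - (a₁ - a₂)`, integrating by parts in both variables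
trades the factor `a₁ - a₂` for `T(φ'(x) - φ'(y))`. -/
lemma abs_sub_mul_norm_kernelForm_le (h : IsPhasePair φ S C) (hu : IsWeight u Cu)
    (hwu : IsWeight (fun w ↦ w * u w) Cu) (hA₁ : IsAmplitude A₁ 1 2 D₁)
    (hA₂ : IsAmplitude A₂ 1 2 D₂) (hT : 0 < T) (hB : 0 < B) (a₁ a₂ : ℝ) :
    |a₁ - a₂| * ‖kernelForm B S u
        (tensor (wave A₁ (tiltedPhase φ T a₁)) (wave A₂ (tiltedPhase φ T a₂)))‖ ≤
      T * ‖kernelForm B S u fun p ↦ ((deriv φ p.1 - deriv φ p.2 : ℝ) : ℂ) *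
        tensor (wave A₁ (tiltedPhase φ T a₁)) (wave A₂ (tiltedPhase φ T a₂)) p‖ +
      12 * C ^ 5 * Cu * D₁ * D₂ / B := by
  have hleft := h.norm_kernelForm_deriv_left_add_le hu hwu hA₁ hB
    (h.continuous_wave hA₂.continuous T a₂)
    (fun y hy ↦ (norm_wave _ _ y).trans_le (hA₂.norm_le hy)) T a₁
  have hright := h.norm_kernelForm_deriv_right_add_le hu hwu hA₂ hB
    (h.continuous_wave hA₁.continuous T a₁)
    (fun x hx ↦ (norm_wave _ _ x).trans_le (hA₁.norm_le hx)) T a₂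
  have hprofile := h.norm_kernelForm_deriv_sub_mul_le hwu hA₁ hA₂ hB T a₁ a₂
  have hidentity := h.sub_mul_kernelForm_eq (B := B) hu hwu T a₁ a₂
    (continuous_tensor (h.continuous_wave hA₁.continuous T a₁)
      (h.continuous_wave hA₂.continuous T a₂))
  have hpow : 4 * C ^ 4 * Cu * D₁ * D₂ / B ≤ 4 * C ^ 5 * Cu * D₁ * D₂ / B := by
    have hC := h.controlled.one_le
    have hCu := hu.nonneg
    have hD₁ := hA₁.nonneg one_le_two
    have hD₂ := hA₂.nonneg one_le_two
    gcongr
    norm_num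
  calc _ = ‖((a₁ - a₂ : ℝ) : ℂ) * kernelForm B S u
        (tensor (wave A₁ (tiltedPhase φ T a₁)) (wave A₂ (tiltedPhase φ T a₂)))‖ := by
        rw [norm_mul, Complex.norm_real, Real.norm_eq_abs]
    _ ≤ _ + 4 * C ^ 5 * Cu * D₁ * D₂ / B + 4 * C ^ 4 * Cu * D₁ * D₂ / B +
          4 * C ^ 4 * Cu * D₂ * D₁ / B := by
        rw [hidentity]
        refine norm_add_le_of_le (norm_sub_le_of_le (norm_add_le_of_le le_rfl ?_) hleft) hright
        rwa [norm_mul, Complex.norm_of_nonneg hB.le]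
    _ ≤ _ := by
        have htwelve : 12 * C ^ 5 * Cu * D₁ * D₂ / B = 3 * (4 * C ^ 5 * Cu * D₁ * D₂ / B) := by
          ring
        rw [htwelve, mul_right_comm _ D₂ D₁, norm_mul, Complex.norm_of_nonneg hT.le]
        linarith

lemma norm_kernelForm_sub_mul_le (h : IsPhasePair φ S C) (hu : IsWeight u Cu)
    (hu' : IsWeight (deriv u) Cu) (hA₁ : IsAmplitude A₁ 1 2 D₁) (hA₂ : IsAmplitude A₂ 1 2 D₂)
    (hT : 0 < T) (hB : 0 < B) (a₁ a₂ : ℝ) :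
    T * ‖kernelForm B S u fun p ↦ ((S p.1 - S p.2 : ℝ) : ℂ) *
        tensor (wave A₁ (tiltedPhase φ T a₁)) (wave A₂ (tiltedPhase φ T a₂)) p‖ ≤
      32 * C ^ 6 * Cu * D₁ * D₂ / B := by
  have hbound := h.norm_kernelForm_le hu' hA₁ hA₂ hT hB a₁ a₂
  have hfactor : B ≤ ‖-(2 * (Real.pi : ℂ) * Complex.I * B)‖ := by
    simp only [norm_neg, norm_mul, Complex.norm_I, mul_one, Complex.norm_real, Complex.norm_ofNat,
      Real.norm_of_nonneg Real.pi_pos.le, Real.norm_of_nonneg hB.le]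
    nlinarith [Real.pi_gt_three]
  rw [kernelForm_deriv_weight (hu.contDiff.of_le (by norm_num)) hu.support_subset, norm_mul,
    le_div_iff₀ hT] at hbound
  rw [le_div_iff₀ hB]
  refine le_trans ?_ hbound
  rw [mul_right_comm, mul_comm T, mul_right_comm]
  gcongr

/-- The coefficient `φ''/S'` matches `φ'(x) - φ'(y)` with `S(x) - S(y)` to first order at the
diagonal. -/
lemma abs_deriv_sub_sub_div_mul_le (h : IsPhasePair φ S C) (x y : ℝ) :
    |deriv φ x - deriv φ y - deriv (deriv φ) x / deriv S x * (S x - S y)| ≤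
      2 * C ^ 3 * (x - y) ^ 2 := by
  have hC := h.controlled.one_le
  have hratio := h.controlled_deriv.isControlledFactor_deriv.abs_div_le
    h.controlled.isControlledFactor_deriv x
  have hsplit : deriv φ x - deriv φ y - deriv (deriv φ) x / deriv S x * (S x - S y) =
      deriv φ x - deriv φ y - deriv (deriv φ) x * (x - y) -
        deriv (deriv φ) x / deriv S x * (S x - S y - deriv S x * (x - y)) := by
    have hne := h.controlled.deriv_ne_zero x
    field_simp
    ring
  calc _ ≤ C * (x - y) ^ 2 + C ^ 2 * (C * (x - y) ^ 2) := by
        rw [hsplit]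
        refine (abs_sub _ _).trans ?_
        rw [abs_mul]
        gcongr
        exacts [h.controlled_deriv.abs_sub_sub_deriv_mul_le x y,
          h.controlled.abs_sub_sub_deriv_mul_le x y]
    _ ≤ C ^ 3 * (x - y) ^ 2 + C ^ 2 * (C * (x - y) ^ 2) := by
        gcongr
        exact le_self_pow₀ hC (by norm_num)
    _ = 2 * C ^ 3 * (x - y) ^ 2 := by ring

lemma continuous_deriv_deriv_div_mul_sub (h : IsPhasePair φ S C) :
    Continuous fun p : ℝ × ℝ ↦ deriv (deriv φ) p.1 / deriv S p.1 * (S p.1 - S p.2) := by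
  have hcS := h.controlled.continuous
  have hcg : Continuous fun x ↦ deriv (deriv φ) x / deriv S x :=
    h.controlled_deriv.continuous_deriv.div₀ h.controlled.continuous_deriv
      h.controlled.deriv_ne_zero
  exact (hcg.comp continuous_fst).mul (by fun_prop)

lemma norm_kernelForm_quadratic_mul_le (h : IsPhasePair φ S C) (hu : IsWeight u Cu)
    (hA₁ : IsAmplitude A₁ 1 2 D₁) (hA₂ : IsAmplitude A₂ 1 2 D₂) (hB : 0 < B)
    (hTB : T ≤ B ^ 2) (a₁ a₂ : ℝ) :
    T * ‖kernelForm B S u fun p ↦ ((deriv φ p.1 - deriv φ p.2 -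
          deriv (deriv φ) p.1 / deriv S p.1 * (S p.1 - S p.2) : ℝ) : ℂ) *
        tensor (wave A₁ (tiltedPhase φ T a₁)) (wave A₂ (tiltedPhase φ T a₂)) p‖ ≤
      8 * C ^ 7 * Cu * D₁ * D₂ / B := by
  have hC := h.controlled.pos
  have hcφ' := h.controlled_deriv.continuous
  have hcg := h.continuous_deriv_deriv_div_mul_sub
  have hμ (x y : ℝ) : |deriv φ x - deriv φ y - deriv (deriv φ) x / deriv S x * (S x - S y)| ≤
      2 * C ^ 3 / B ^ 2 * (1 + (B * (x - y)) ^ 2) := by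
    refine (h.abs_deriv_sub_sub_div_mul_le x y).trans ?_
    rw [div_mul_eq_mul_div, le_div_iff₀ (by positivity), mul_assoc]
    gcongr
    nlinarith
  calc _ ≤ B ^ 2 * (4 * C ^ 4 * Cu * (2 * C ^ 3 / B ^ 2) * D₁ * D₂ / B) := by
        gcongr
        exact h.norm_kernelForm_mul_le hu hA₁ hA₂ hB (.sub (by fun_prop) hcg) hμ T a₁ a₂
    _ = 8 * C ^ 7 * Cu * D₁ * D₂ / B := by
        field_simp
        ring

lemma norm_kernelForm_div_mul_sub_mul_le (h : IsPhasePair φ S C) (hu : IsWeight u Cu)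
    (hu' : IsWeight (deriv u) Cu) (hA₁ : IsAmplitude A₁ 1 2 D₁) (hA₂ : IsAmplitude A₂ 1 2 D₂)
    (hT : 0 < T) (hB : 0 < B) (a₁ a₂ : ℝ) :
    T * ‖kernelForm B S u fun p ↦
        ((deriv (deriv φ) p.1 / deriv S p.1 * (S p.1 - S p.2) : ℝ) : ℂ) *
          tensor (wave A₁ (tiltedPhase φ T a₁)) (wave A₂ (tiltedPhase φ T a₂)) p‖ ≤
      96 * C ^ 10 * Cu * D₁ * D₂ / B := by
  have hamplitude := hA₁.controlledFactor_div_mul h.controlled_deriv.isControlledFactor_deriv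
    h.controlled.isControlledFactor_deriv
  refine (Eq.le ?_).trans ((h.norm_kernelForm_sub_mul_le hu hu' hamplitude hA₂ hT hB a₁ a₂).trans_eq
    (by ring))
  congr 3 with p
  rw [tensor_wave_mul_left]
  push_cast
  ring

lemma norm_kernelForm_deriv_phase_sub_mul_le (h : IsPhasePair φ S C) (hu : IsWeight u Cu)
    (hu' : IsWeight (deriv u) Cu) (hA₁ : IsAmplitude A₁ 1 2 D₁) (hA₂ : IsAmplitude A₂ 1 2 D₂)
    (hT : 0 < T) (hB : 0 < B) (hTB : T ≤ B ^ 2) (a₁ a₂ : ℝ) :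
    T * ‖kernelForm B S u fun p ↦ ((deriv φ p.1 - deriv φ p.2 : ℝ) : ℂ) *
        tensor (wave A₁ (tiltedPhase φ T a₁)) (wave A₂ (tiltedPhase φ T a₂)) p‖ ≤
      104 * C ^ 10 * Cu * D₁ * D₂ / B := by
  have hC := h.controlled.one_le
  have hCu := hu.nonneg
  have hD₁ := hA₁.nonneg one_le_two
  have hD₂ := hA₂.nonneg one_le_two
  have hquadratic := h.norm_kernelForm_quadratic_mul_le hu hA₁ hA₂ hB hTB a₁ a₂
  have hlinear := h.norm_kernelForm_div_mul_sub_mul_le hu hu' hA₁ hA₂ hT hB a₁ a₂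
  have hcS := h.controlled.continuous
  have hcφ' := h.controlled_deriv.continuous
  have hcg := h.continuous_deriv_deriv_div_mul_sub
  rw [kernelForm_ofReal_sub_mul hcS hu.continuous_weightKernel (by fun_prop) hcg
    (continuous_tensor (h.continuous_wave hA₁.continuous T a₁)
      (h.continuous_wave hA₂.continuous T a₂))] at hquadratic
  calc _ ≤ 8 * C ^ 7 * Cu * D₁ * D₂ / B + 96 * C ^ 10 * Cu * D₁ * D₂ / B := by
        refine le_trans ?_ (add_le_add hquadratic hlinear)
        rw [← mul_add]
        gcongr
        exact norm_le_norm_sub_add _ _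
    _ ≤ 8 * C ^ 10 * Cu * D₁ * D₂ / B + 96 * C ^ 10 * Cu * D₁ * D₂ / B := by
        gcongr
        norm_num
    _ = 104 * C ^ 10 * Cu * D₁ * D₂ / B := by ring

/-- For `ξ` with `T φ'(ξ) = a`, the quotient of the divided differences of `S` and `φ'` at `ξ`
turns `T(S(x) - S(ξ))` into a multiple of the derivative of the tilted phase. -/
lemma mul_sub_eq_dividedDiff_div_mul (h : IsPhasePair φ S C) {ξ : ℝ} (hξ : T * deriv φ ξ = a)
    (x : ℝ) :
    T * (S x - S ξ) =
      dividedDiff S ξ x / dividedDiff (deriv φ) ξ x * (T * deriv φ x - a) := by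
  have hne := (h.controlled_deriv.isControlledFactor_dividedDiff ξ).ne_zero x
  rw [← hξ, ← mul_sub, h.controlled.sub_eq_mul_dividedDiff,
    h.controlled_deriv.sub_eq_mul_dividedDiff]
  field_simp

lemma norm_kernelForm_sub_apply_left_mul_le (h : IsPhasePair φ S C) (hu : IsWeight u Cu)
    (hwu : IsWeight (fun w ↦ w * u w) Cu) (hA₁ : IsAmplitude A₁ 1 2 D₁)
    (hA₂ : IsAmplitude A₂ 1 2 D₂) (hT : 0 < T) (hB : 0 < B) (hBT : B ^ 2 ≤ T) {ξ : ℝ}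
    (hξ : T * deriv φ ξ = a₁) (a₂ : ℝ) :
    ‖kernelForm B S u fun p ↦ ((T * (S p.1 - S ξ) : ℝ) : ℂ) *
        tensor (wave A₁ (tiltedPhase φ T a₁)) (wave A₂ (tiltedPhase φ T a₂)) p‖ ≤
      204 * C ^ 11 * Cu * D₁ * D₂ / B := by
  have hC := h.controlled.one_le
  have hCu := hu.nonneg
  have hD₁ := hA₁.nonneg one_le_two
  have hD₂ := hA₂.nonneg one_le_two
  have hamplitude := hA₁.controlledFactor_div_mul (h.controlled.isControlledFactor_dividedDiff ξ)
    (h.controlled_deriv.isControlledFactor_dividedDiff ξ)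
  have hparts := h.norm_kernelForm_deriv_left_add_le hu hwu hamplitude hB
    (h.continuous_wave hA₂.continuous T a₂)
    (fun y hy ↦ (norm_wave _ _ y).trans_le (hA₂.norm_le hy)) T a₁
  have hprofile := h.norm_kernelForm_le hwu
    (hamplitude.controlledFactor_mul h.controlled.isControlledFactor_deriv) hA₂ hT hB a₁ a₂
  have hphase (p : ℝ × ℝ) : ((T * (S p.1 - S ξ) : ℝ) : ℂ) *
      tensor (wave A₁ (tiltedPhase φ T a₁)) (wave A₂ (tiltedPhase φ T a₂)) p =
      ((T * deriv φ p.1 - a₁ : ℝ) : ℂ) * tensor (wave (fun x ↦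
        ((dividedDiff S ξ x / dividedDiff (deriv φ) ξ x : ℝ) : ℂ) * A₁ x) (tiltedPhase φ T a₁))
        (wave A₂ (tiltedPhase φ T a₂)) p := by
    rw [h.mul_sub_eq_dividedDiff_div_mul hξ, tensor_wave_mul_left, Complex.ofReal_mul]
    ring
  rw [funext (tensor_wave_mul_left _ _ _ _)] at hprofile
  simp only [hphase]
  calc _ ≤ 4 * C ^ 4 * Cu * (3 * C ^ 4 * D₁) * D₂ / B +
          B * (32 * C ^ 6 * Cu * (2 * C * (3 * C ^ 4 * D₁)) * D₂ / T) := by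
        refine (norm_le_add_norm_add _ _).trans (add_le_add hparts ?_)
        rw [norm_mul, Complex.norm_of_nonneg hB.le]
        gcongr
    _ = 12 * C ^ 8 * Cu * D₁ * D₂ / B + 192 * C ^ 11 * Cu * D₁ * D₂ * (B / T) := by ring
    _ ≤ 12 * C ^ 11 * Cu * D₁ * D₂ / B + 192 * C ^ 11 * Cu * D₁ * D₂ * (1 / B) := by
        gcongr ?_ + _ * ?_
        · gcongr
          norm_num
        · rw [div_le_div_iff₀ hT hB]
          linarith
    _ = 204 * C ^ 11 * Cu * D₁ * D₂ / B := by ring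

lemma norm_kernelForm_sub_apply_right_mul_le (h : IsPhasePair φ S C) (hu : IsWeight u Cu)
    (hwu : IsWeight (fun w ↦ w * u w) Cu) (hA₁ : IsAmplitude A₁ 1 2 D₁)
    (hA₂ : IsAmplitude A₂ 1 2 D₂) (hT : 0 < T) (hB : 0 < B) (hBT : B ^ 2 ≤ T) {ξ : ℝ}
    (hξ : T * deriv φ ξ = a₂) (a₁ : ℝ) :
    ‖kernelForm B S u fun p ↦ ((T * (S p.2 - S ξ) : ℝ) : ℂ) *
        tensor (wave A₁ (tiltedPhase φ T a₁)) (wave A₂ (tiltedPhase φ T a₂)) p‖ ≤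
      204 * C ^ 11 * Cu * D₁ * D₂ / B := by
  rw [kernelForm_ofReal_snd_mul_tensor B S u fun x ↦ T * (S x - S ξ), RCLike.norm_conj,
    mul_right_comm _ D₁]
  exact h.norm_kernelForm_sub_apply_left_mul_le hu hwu hA₂ hA₁ hT hB hBT hξ a₁

lemma abs_sub_mul_norm_kernelForm_le_of_le_sq (h : IsPhasePair φ S C) (hu : IsWeight u Cu)
    (hu' : IsWeight (deriv u) Cu) (hwu : IsWeight (fun w ↦ w * u w) Cu)
    (hA₁ : IsAmplitude A₁ 1 2 D₁) (hA₂ : IsAmplitude A₂ 1 2 D₂) (hT : 0 < T) (hB : 0 < B)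
    (hTB : T ≤ B ^ 2) (a₁ a₂ : ℝ) :
    |a₁ - a₂| * ‖kernelForm B S u
        (tensor (wave A₁ (tiltedPhase φ T a₁)) (wave A₂ (tiltedPhase φ T a₂)))‖ ≤
      440 * C ^ 13 * Cu * D₁ * D₂ / B := by
  have hC := h.controlled.one_le
  have hCu := hu.nonneg
  have hD₁ := hA₁.nonneg one_le_two
  have hD₂ := hA₂.nonneg one_le_two
  calc _ ≤ 104 * C ^ 10 * Cu * D₁ * D₂ / B + 12 * C ^ 5 * Cu * D₁ * D₂ / B :=
        (h.abs_sub_mul_norm_kernelForm_le hu hwu hA₁ hA₂ hT hB a₁ a₂).trans <| add_le_add_left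
          (h.norm_kernelForm_deriv_phase_sub_mul_le hu hu' hA₁ hA₂ hT hB hTB a₁ a₂) _
    _ ≤ 428 * C ^ 13 * Cu * D₁ * D₂ / B + 12 * C ^ 13 * Cu * D₁ * D₂ / B := by
        gcongr <;> norm_num
    _ = 440 * C ^ 13 * Cu * D₁ * D₂ / B := by ring

lemma abs_sub_le_of_mul_deriv_eq (h : IsPhasePair φ S C) (hT : 0 < T) {ξ₁ ξ₂ : ℝ}
    (hξ₁ : T * deriv φ ξ₁ = a₁) (hξ₂ : T * deriv φ ξ₂ = a₂) :
    |a₁ - a₂| ≤ C ^ 2 * |T * (S ξ₁ - S ξ₂)| := by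
  have hC := h.controlled.pos
  calc |a₁ - a₂| = T * |deriv φ ξ₁ - deriv φ ξ₂| := by
        rw [← hξ₁, ← hξ₂, ← mul_sub, abs_mul, abs_of_pos hT]
    _ ≤ T * (C * (C * |S ξ₁ - S ξ₂|)) := by
        gcongr
        refine (h.controlled_deriv.abs_sub_le ξ₁ ξ₂).trans ?_
        gcongr
        exact h.controlled.abs_sub_le_mul_abs_map_sub ξ₁ ξ₂
    _ = C ^ 2 * |T * (S ξ₁ - S ξ₂)| := by
        rw [abs_mul, abs_of_pos hT]
        ring

lemma mul_sub_mul_kernelForm_eq (h : IsPhasePair φ S C) (hu : IsWeight u Cu) (T ξ₁ ξ₂ : ℝ)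
    {F : ℝ × ℝ → ℂ} (hF : Continuous F) :
    ((T * (S ξ₁ - S ξ₂) : ℝ) : ℂ) * kernelForm B S u F =
      T * (kernelForm B S u fun p ↦ ((S p.1 - S p.2 : ℝ) : ℂ) * F p) -
        (kernelForm B S u fun p ↦ ((T * (S p.1 - S ξ₁) : ℝ) : ℂ) * F p) +
        (kernelForm B S u fun p ↦ ((T * (S p.2 - S ξ₂) : ℝ) : ℂ) * F p) := by
  have hcS := h.controlled.continuous
  have hcK := hu.continuous_weightKernel
  rw [← kernelForm_const_mul, ← kernelForm_const_mul,
    ← kernelForm_sub hcS hcK (by fun_prop) (by fun_prop),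
    ← kernelForm_add hcS hcK (by fun_prop) (by fun_prop)]
  congr 1 with p
  push_cast
  ring

lemma abs_sub_mul_norm_kernelForm_le_of_sq_le (h : IsPhasePair φ S C) (hu : IsWeight u Cu)
    (hu' : IsWeight (deriv u) Cu) (hwu : IsWeight (fun w ↦ w * u w) Cu)
    (hA₁ : IsAmplitude A₁ 1 2 D₁) (hA₂ : IsAmplitude A₂ 1 2 D₂) (hT : 0 < T) (hB : 0 < B)
    (hBT : B ^ 2 ≤ T) (a₁ a₂ : ℝ) :
    |a₁ - a₂| * ‖kernelForm B S u
        (tensor (wave A₁ (tiltedPhase φ T a₁)) (wave A₂ (tiltedPhase φ T a₂)))‖ ≤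
      440 * C ^ 13 * Cu * D₁ * D₂ / B := by
  have hC := h.controlled.one_le
  have hCu := hu.nonneg
  have hD₁ := hA₁.nonneg one_le_two
  have hD₂ := hA₂.nonneg one_le_two
  obtain ⟨ξ₁, hξ₁⟩ := h.controlled_deriv.surjective (a₁ / T)
  obtain ⟨ξ₂, hξ₂⟩ := h.controlled_deriv.surjective (a₂ / T)
  rw [eq_div_iff hT.ne', mul_comm] at hξ₁ hξ₂
  have hleft := h.norm_kernelForm_sub_apply_left_mul_le hu hwu hA₁ hA₂ hT hB hBT hξ₁ a₂
  have hright := h.norm_kernelForm_sub_apply_right_mul_le hu hwu hA₁ hA₂ hT hB hBT hξ₂ a₁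
  have hdiff := h.norm_kernelForm_sub_mul_le hu hu' hA₁ hA₂ hT hB a₁ a₂
  set F := tensor (wave A₁ (tiltedPhase φ T a₁)) (wave A₂ (tiltedPhase φ T a₂))
  have hF : Continuous F := continuous_tensor (h.continuous_wave hA₁.continuous T a₁)
    (h.continuous_wave hA₂.continuous T a₂)
  calc |a₁ - a₂| * ‖kernelForm B S u F‖
      ≤ C ^ 2 * |T * (S ξ₁ - S ξ₂)| * ‖kernelForm B S u F‖ := by
        gcongr
        exact h.abs_sub_le_of_mul_deriv_eq hT hξ₁ hξ₂
    _ = C ^ 2 * ‖((T * (S ξ₁ - S ξ₂) : ℝ) : ℂ) * kernelForm B S u F‖ := by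
        rw [norm_mul, Complex.norm_real, Real.norm_eq_abs, mul_assoc]
    _ ≤ C ^ 2 * (32 * C ^ 6 * Cu * D₁ * D₂ / B + 204 * C ^ 11 * Cu * D₁ * D₂ / B +
          204 * C ^ 11 * Cu * D₁ * D₂ / B) := by
        rw [h.mul_sub_mul_kernelForm_eq hu T ξ₁ ξ₂ hF]
        gcongr
        refine norm_add_le_of_le (norm_sub_le_of_le ?_ hleft) hright
        rwa [norm_mul, Complex.norm_of_nonneg hT.le]
    _ ≤ C ^ 2 * (32 * C ^ 11 * Cu * D₁ * D₂ / B + 204 * C ^ 11 * Cu * D₁ * D₂ / B +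
          204 * C ^ 11 * Cu * D₁ * D₂ / B) := by
        gcongr
        norm_num
    _ = 440 * C ^ 13 * Cu * D₁ * D₂ / B := by ring

theorem abs_sub_mul_norm_kernelForm_le_div (h : IsPhasePair φ S C) (hu : IsWeight u Cu)
    (hu' : IsWeight (deriv u) Cu) (hwu : IsWeight (fun w ↦ w * u w) Cu)
    (hA₁ : IsAmplitude A₁ 1 2 D₁) (hA₂ : IsAmplitude A₂ 1 2 D₂) (hT : 0 < T) (hB : 0 < B)
    (a₁ a₂ : ℝ) :
    |a₁ - a₂| * ‖kernelForm B S u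
        (tensor (wave A₁ (tiltedPhase φ T a₁)) (wave A₂ (tiltedPhase φ T a₂)))‖ ≤
      440 * C ^ 13 * Cu * D₁ * D₂ / B :=
  (le_total T (B ^ 2)).elim
    (h.abs_sub_mul_norm_kernelForm_le_of_le_sq hu hu' hwu hA₁ hA₂ hT hB · a₁ a₂)
    (h.abs_sub_mul_norm_kernelForm_le_of_sq_le hu hu' hwu hA₁ hA₂ hT hB · a₁ a₂)

end IsPhasePair

end StationaryPhase

section Extension

variable {c r R : ℝ}

lemma exists_contDiff_retraction (c : ℝ) (hr : 0 < r) (hrR : r < R) :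
    ∃ (σ : ℝ → ℝ) (κ : ℝ), ContDiff ℝ ∞ σ ∧ (∀ x, σ x ∈ Metric.ball c R) ∧
      (∀ x ∈ Metric.closedBall c r, σ x = x) ∧ ∀ x, |deriv σ x| ≤ κ := by
  let ρ : ContDiffBump c := ⟨r, R, hr, hrR⟩
  let δ : ℝ → ℝ := fun x ↦ (x - c) * ρ x
  have hδ : ContDiff ℝ ∞ δ := (contDiff_id.sub contDiff_const).mul ρ.contDiff
  have hδs : HasCompactSupport δ := ρ.hasCompactSupport.mul_left
  obtain ⟨κ, hκ⟩ := hδs.deriv.exists_bound_of_continuous (hδ.continuous_deriv (by simp))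
  refine ⟨fun x ↦ c + δ x, κ, contDiff_const.add hδ, fun x ↦ ?_, fun x hx ↦ ?_, fun x ↦ ?_⟩
  · rw [mem_ball_iff_norm', sub_add_cancel_left, norm_neg, norm_mul,
      Real.norm_of_nonneg ρ.nonneg]
    by_cases hx : x ∈ Metric.ball c R
    · exact (mul_le_of_le_one_right (norm_nonneg _) ρ.le_one).trans_lt (mem_ball_iff_norm.1 hx)
    · rw [ρ.zero_of_le_dist (not_lt.1 hx), mul_zero]
      exact hr.trans hrR
  · simp only [δ, ρ.one_of_mem_closedBall hx, mul_one, add_sub_cancel]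
  · rw [deriv_const_add]
    exact hκ x

lemma exists_hasDerivAt_eqOn {f f' : ℝ → ℝ} {s : Set ℝ} [hs : s.OrdConnected] (hc : c ∈ s)
    (hf' : Continuous f') (hf : ∀ x ∈ s, HasDerivAt f (f' x) x) :
    ∃ F : ℝ → ℝ, (∀ x, HasDerivAt F (f' x) x) ∧ EqOn F f s := by
  refine ⟨fun x ↦ f c + ∫ t in c..x, f' t, fun x ↦ ?_, fun x hx ↦ ?_⟩
  · exact (hf'.integral_hasStrictDerivAt c x).hasDerivAt.const_add _
  · beta_reduce
    rw [intervalIntegral.integral_eq_sub_of_hasDerivAt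
      (fun y hy ↦ hf y (hs.uIcc_subset hc hx hy)) (hf'.intervalIntegrable _ _), add_sub_cancel]

lemma exists_hasControlledDeriv_eqOn_closedBall (c : ℝ) (hr : 0 < r) (hrR : r < R) :
    ∃ κ, ∀ (f : ℝ → ℝ) (C : ℝ), 1 ≤ C → ContDiffOn ℝ 2 f (Metric.ball c R) →
      (∀ x ∈ Metric.ball c R, C⁻¹ ≤ |deriv f x|) → (∀ x ∈ Metric.ball c R, |deriv f x| ≤ C) →
      (∀ x ∈ Metric.ball c R, |deriv (deriv f) x| ≤ C) →
      ∃ g, HasControlledDeriv g (κ * C) ∧ EqOn g f (Metric.closedBall c r) := by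
  obtain ⟨σ, κ, hσ, hmem, hid, hκ⟩ := exists_contDiff_retraction c hr hrR
  refine ⟨max 1 κ, fun f C hC hf hlow hup hup₂ ↦ ?_⟩
  have hC0 : 0 < C := one_pos.trans_le hC
  have hCκ : C ≤ max 1 κ * C := le_mul_of_one_le_left hC0.le (le_max_left _ _)
  obtain ⟨hdf, -, hf'⟩ :=
    (contDiffOn_succ_iff_deriv_of_isOpen (n := 1) Metric.isOpen_ball).1 hf
  have hf'σ : ContDiff ℝ 1 (deriv f ∘ σ) := hf'.comp_contDiff (hσ.of_le (by simp)) hmem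
  have hderiv (x : ℝ) : deriv (deriv f ∘ σ) x = deriv (deriv f) (σ x) * deriv σ x :=
    deriv_comp x ((hf'.differentiableOn one_ne_zero).differentiableAt
      (Metric.isOpen_ball.mem_nhds (hmem x))) (hσ.differentiable (by simp) x)
  have : (Metric.closedBall c r).OrdConnected := (convex_closedBall c r).ordConnected
  obtain ⟨g, hg, hgf⟩ := exists_hasDerivAt_eqOn (f := f) (Metric.mem_closedBall_self hr.le)
    hf'σ.continuous fun x hx ↦ by
      have hxR := Metric.closedBall_subset_ball hrR hx
      simpa only [Function.comp_apply, hid x hx] using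
        (hdf.differentiableAt (Metric.isOpen_ball.mem_nhds hxR)).hasDerivAt
  have hg' : deriv g = deriv f ∘ σ := funext fun x ↦ (hg x).deriv
  refine ⟨g, ⟨hC.trans hCκ, ?_, fun x ↦ ?_, fun x ↦ ?_, fun x ↦ ?_⟩, hgf⟩
  · exact (contDiff_succ_iff_deriv (n := 1)).2
      ⟨fun x ↦ (hg x).differentiableAt, by simp, hg' ▸ hf'σ⟩
  · exact hg' ▸ (inv_anti₀ hC0 hCκ).trans (hlow _ (hmem x))
  · exact hg' ▸ (hup _ (hmem x)).trans hCκ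
  · rw [hg', hderiv, abs_mul, mul_comm]
    exact mul_le_mul ((hκ x).trans (le_max_right _ _)) (hup₂ _ (hmem x)) (abs_nonneg _)
      (one_pos.le.trans (le_max_left _ _))

lemma deriv_deriv_sqrt {x : ℝ} (hx : 0 < x) : deriv (deriv Real.sqrt) x = -(4 * x * √x)⁻¹ := by
  have hderiv : deriv Real.sqrt =ᶠ[nhds x] fun y ↦ (2 * √y)⁻¹ := by
    filter_upwards [lt_mem_nhds hx] with y hy
    rw [(Real.hasDerivAt_sqrt hy.ne').deriv, one_div]
  have hsqrt : √x ≠ 0 := (Real.sqrt_pos.2 hx).ne'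
  rw [hderiv.deriv_eq, (((Real.hasDerivAt_sqrt hx.ne').const_mul 2).fun_inv (by positivity)).deriv]
  field_simp
  rw [Real.sq_sqrt hx.le]
  norm_num

lemma closedBall_three_halves_half : Metric.closedBall (3 / 2 : ℝ) (1 / 2) = Icc 1 2 := by
  rw [Real.closedBall_eq_Icc]
  norm_num

lemma ball_three_halves_one : Metric.ball (3 / 2 : ℝ) 1 = Ioo (1 / 2) (5 / 2) := by
  rw [Real.ball_eq_Ioo]
  norm_num

lemma exists_hasControlledDeriv_eqOn_Icc :
    ∃ κ, ∀ (f : ℝ → ℝ) (C : ℝ), 1 ≤ C → ContDiffOn ℝ 2 f (Ioo (1 / 2) (5 / 2)) →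
      (∀ x ∈ Ioo (1 / 2) (5 / 2), C⁻¹ ≤ |deriv f x|) →
      (∀ x ∈ Ioo (1 / 2) (5 / 2), |deriv f x| ≤ C) →
      (∀ x ∈ Ioo (1 / 2) (5 / 2), |deriv (deriv f) x| ≤ C) →
      ∃ g, HasControlledDeriv g (κ * C) ∧ EqOn g f (Icc 1 2) := by
  have hext := exists_hasControlledDeriv_eqOn_closedBall (3 / 2) (r := 1 / 2) (R := 1)
    (by norm_num) (by norm_num)
  rwa [closedBall_three_halves_half, ball_three_halves_one] at hext

lemma exists_hasControlledDeriv_eqOn_sqrt :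
    ∃ (S : ℝ → ℝ) (C : ℝ), HasControlledDeriv S C ∧ EqOn S Real.sqrt (Icc 1 2) := by
  obtain ⟨κ, hκ⟩ := exists_hasControlledDeriv_eqOn_Icc
  have hpos {x : ℝ} (hx : x ∈ Ioo (1 / 2) (5 / 2)) : 0 < x := by linarith [hx.1]
  have hlow {x : ℝ} (hx : x ∈ Ioo (1 / 2) (5 / 2)) : 1 / 2 ≤ √x :=
    Real.le_sqrt_of_sq_le (by linarith [hx.1])
  have hup {x : ℝ} (hx : x ∈ Ioo (1 / 2) (5 / 2)) : √x ≤ 2 :=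
    Real.sqrt_le_iff.2 ⟨by simp, by linarith [hx.2]⟩
  have hderiv {x : ℝ} (hx : x ∈ Ioo (1 / 2) (5 / 2)) : |deriv Real.sqrt x| = (2 * √x)⁻¹ := by
    rw [(Real.hasDerivAt_sqrt (hpos hx).ne').deriv, one_div, abs_of_nonneg (by positivity)]
  obtain ⟨S, hS, heq⟩ := hκ Real.sqrt 4 (by norm_num)
    (contDiffOn_id.sqrt fun x hx ↦ (hpos hx).ne')
    (fun x hx ↦ by
      rw [hderiv hx]
      exact inv_anti₀ (by linarith [hlow hx]) (by linarith [hup hx]))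
    (fun x hx ↦ by
      rw [hderiv hx]
      exact inv_le_of_inv_le₀ (by norm_num) (by linarith [hlow hx]))
    (fun x hx ↦ by
      have hx0 := hpos hx
      rw [deriv_deriv_sqrt hx0, abs_neg, abs_of_nonneg (by positivity)]
      refine inv_le_of_inv_le₀ (by norm_num) ?_
      nlinarith [hlow hx, hx.1])
  exact ⟨S, κ * 4, hS, heq⟩

lemma exists_isPhasePair_eqOn (c' : ℝ) {c₀ : ℝ} (hc₀ : 0 < c₀) :
    ∃ C ≥ 1, ∀ φ : ℝ → ℝ, ContDiffOn ℝ 3 φ (Ioo (1 / 2) (5 / 2)) →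
      (∀ j : ℕ, j = 2 ∨ j = 3 → ∀ x ∈ Ioo ((1 : ℝ) / 2) (5 / 2),
        |iteratedDerivWithin j φ (Ioo (1 / 2) (5 / 2)) x| ≤ c') →
      (∀ x ∈ Ioo ((1 : ℝ) / 2) (5 / 2),
        c₀ ≤ |iteratedDerivWithin 2 φ (Ioo (1 / 2) (5 / 2)) x|) →
      ∃ ψ S : ℝ → ℝ, IsPhasePair ψ S C ∧ EqOn ψ φ (Icc 1 2) ∧ EqOn S Real.sqrt (Icc 1 2) := by
  obtain ⟨κ, hext⟩ := exists_hasControlledDeriv_eqOn_Icc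
  obtain ⟨S, CS, hS, hSsqrt⟩ := exists_hasControlledDeriv_eqOn_sqrt
  let C := max 1 (max c' c₀⁻¹)
  have hc'C : c' ≤ C := (le_max_left _ _).trans (le_max_right _ _)
  have hc₀C : C⁻¹ ≤ c₀ := inv_le_of_inv_le₀ hc₀ ((le_max_right _ _).trans (le_max_right _ _))
  refine ⟨max (κ * C) CS, hS.one_le.trans (le_max_right _ _), fun φ hφ hup hlow ↦ ?_⟩
  have hφ₂ {x : ℝ} (hx : x ∈ Ioo (1 / 2) (5 / 2)) :
      iteratedDerivWithin 2 φ (Ioo (1 / 2) (5 / 2)) x = deriv (deriv φ) x := by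
    rw [iteratedDerivWithin_of_isOpen isOpen_Ioo hx, iteratedDeriv_succ, iteratedDeriv_one]
  have hφ₃ {x : ℝ} (hx : x ∈ Ioo (1 / 2) (5 / 2)) :
      iteratedDerivWithin 3 φ (Ioo (1 / 2) (5 / 2)) x = deriv (deriv (deriv φ)) x := by
    rw [iteratedDerivWithin_of_isOpen isOpen_Ioo hx, iteratedDeriv_succ, iteratedDeriv_succ,
      iteratedDeriv_one]
  obtain ⟨hdφ, -, hφ'⟩ := (contDiffOn_succ_iff_deriv_of_isOpen (n := 2) isOpen_Ioo).1 hφ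
  obtain ⟨z, hz, hzφ⟩ := hext (deriv φ) C (le_max_left _ _) hφ'
    (fun x hx ↦ hc₀C.trans (hφ₂ hx ▸ hlow x hx))
    (fun x hx ↦ (hφ₂ hx ▸ hup 2 (.inl rfl) x hx).trans hc'C)
    (fun x hx ↦ (hφ₃ hx ▸ hup 3 (.inr rfl) x hx).trans hc'C)
  obtain ⟨ψ, hψ, hψφ⟩ := exists_hasDerivAt_eqOn (f := φ) (left_mem_Icc.2 one_le_two)
    hz.continuous fun x hx ↦ by
      rw [hzφ hx]
      exact (hdφ.differentiableAt (isOpen_Ioo.mem_nhds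
        ⟨by linarith [hx.1], by linarith [hx.2]⟩)).hasDerivAt
  refine ⟨ψ, S, ⟨fun x ↦ (hψ x).differentiableAt, ?_, hS.mono (le_max_right _ _)⟩, hψφ, hSsqrt⟩
  rw [show deriv ψ = z from funext fun x ↦ (hψ x).deriv]
  exact hz.mono (le_max_left _ _)

end Extension

section SquareSubstitution

/-- The weight `2wU(w²)` on `w > 0` into which the substitution `y = w²` turns `U(y)`; the smooth
cutoff, equal to `1` on `[1, ∞)`, removes the mirror image at `w < 0`. -/
noncomputable def squareWeight (U : ℝ → ℝ) (w : ℝ) : ℝ :=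
  2 * w * U (w ^ 2) * Real.smoothTransition w

variable {U : ℝ → ℝ}

lemma contDiff_squareWeight (hU : ContDiff ℝ ∞ U) : ContDiff ℝ ∞ (squareWeight U) :=
  ((contDiff_const.mul contDiff_id).mul (hU.comp (contDiff_id.pow 2))).mul
    Real.smoothTransition.contDiff

lemma mem_Icc_one_two_of_sq_mem {w : ℝ} (hw : 0 < w) (hsq : w ^ 2 ∈ Icc (1 : ℝ) 2) :
    w ∈ Icc (1 : ℝ) 2 :=
  ⟨by nlinarith [hsq.1], by nlinarith [hsq.2]⟩

lemma support_squareWeight_subset (hsupp : Function.support U ⊆ Icc 1 2) :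
    Function.support (squareWeight U) ⊆ Icc 1 2 := by
  intro w hw
  have hw0 : 0 < w := by
    by_contra! hle
    exact right_ne_zero_of_mul hw (Real.smoothTransition.zero_of_nonpos hle)
  exact mem_Icc_one_two_of_sq_mem hw0 (hsupp (right_ne_zero_of_mul (left_ne_zero_of_mul hw)))

lemma integral_Ioi_eq_intervalIntegral_one_two {f : ℝ → ℂ}
    (hf : ∀ x > 0, x ∉ Icc (1 : ℝ) 2 → f x = 0) :
    ∫ x in Ioi (0 : ℝ), f x = ∫ x in (1 : ℝ)..2, f x := by
  rw [intervalIntegral.integral_of_le one_le_two, ← integral_Icc_eq_integral_Ioc]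
  exact setIntegral_eq_of_subset_of_forall_sdiff_eq_zero measurableSet_Ioi
    (fun x hx ↦ one_pos.trans_le hx.1) fun x hx ↦ hf x hx.1 hx.2

lemma integral_Ioi_mul_comp_sqrt (hsupp : Function.support U ⊆ Icc 1 2) (G : ℝ → ℂ) :
    ∫ y in Ioi (0 : ℝ), (U y : ℂ) * G √y = ∫ w in (1 : ℝ)..2, (squareWeight U w : ℂ) * G w := by
  rw [← integral_comp_rpow_Ioi_of_pos (g := fun y ↦ (U y : ℂ) * G √y) two_pos,
    integral_Ioi_eq_intervalIntegral_one_two]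
  · refine intervalIntegral.integral_congr fun w hw ↦ ?_
    rw [uIcc_of_le one_le_two] at hw
    have hw0 : 0 ≤ w := one_pos.le.trans hw.1
    norm_num [squareWeight, Real.smoothTransition.one_of_one_le hw.1, Real.sqrt_sq hw0, mul_assoc]
  · intro w hw hmem
    have hU : U (w ^ 2) = 0 := by
      by_contra hne
      exact hmem (mem_Icc_one_two_of_sq_mem hw (hsupp hne))
    norm_num [hU]

end SquareSubstitution

section Reduction

variable {V : ℝ → ℂ} {U φ ψ S : ℝ → ℝ} {M p : ℕ} {N T K P C Cu D γ : ℝ} {r r₁ r₂ : ℤ}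

lemma Jcal_eq_oscIntegral (hM : 1 ≤ M) (hN : 0 < N) (hK : 0 < K) (hP : 0 < P) (hp : 0 < p)
    (hV : Function.support V ⊆ Icc 1 2) (hψ : EqOn ψ φ (Icc 1 2))
    (hS : EqOn S Real.sqrt (Icc 1 2)) (y : ℝ) :
    Jcal V φ M N T γ p r (M * (P ^ 2 * K ^ 2 / N) * y) =
      oscIntegral (2 * (P * K) / p) S (wave V (tiltedPhase ψ T ((r - γ * p) * N / p))) √y := by
  rw [Jcal, oscIntegral, integral_Ioi_eq_intervalIntegral_one_two fun x _ hx ↦ by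
    rw [Function.notMem_support.1 fun h ↦ hx (hV h), zero_mul]]
  refine intervalIntegral.integral_congr fun x hx ↦ ?_
  rw [uIcc_of_le one_le_two] at hx
  have hx0 : 0 ≤ x := one_pos.le.trans hx.1
  have hsqrtM : √(M : ℝ) ≠ 0 := (Real.sqrt_pos.2 (by exact_mod_cast hM)).ne'
  have hp0 : (p : ℝ) ≠ 0 := by positivity
  have hsqrt : √(N * x * (M * (P ^ 2 * K ^ 2 / N) * y)) = √M * (P * K) * (√x * √y) := by
    rw [show N * x * (M * (P ^ 2 * K ^ 2 / N) * y) = M * (P * K) ^ 2 * (x * y) by field_simp,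
      Real.sqrt_mul (by positivity), Real.sqrt_mul (by positivity), Real.sqrt_sq (by positivity),
      Real.sqrt_mul hx0]
  simp only [wave, tiltedPhase]
  rw [mul_assoc (V x), ← e_add, hψ hx, hS hx, hsqrt]
  congr 2
  field_simp
  ring

lemma Lcal_zero_eq_kernelForm (hM : 1 ≤ M) (hN : 0 < N) (hK : 0 < K) (hP : 0 < P) (hp : 0 < p)
    (hUsupp : Function.support U ⊆ Icc 1 2) (hu : IsWeight (squareWeight U) Cu)
    (hV : Continuous V) (hVsupp : Function.support V ⊆ Icc 1 2)
    (h : IsPhasePair ψ S C) (hψ : EqOn ψ φ (Icc 1 2)) (hS : EqOn S Real.sqrt (Icc 1 2)) :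
    Lcal U V φ M N T γ (P ^ 2 * K ^ 2 / N) p p r₁ r₂ 0 =
      kernelForm (2 * (P * K) / p) S (squareWeight U)
        (tensor (wave V (tiltedPhase ψ T ((r₁ - γ * p) * N / p)))
          (wave V (tiltedPhase ψ T ((r₂ - γ * p) * N / p)))) := by
  rw [← integral_oscIntegral_mul_conj h.controlled.continuous hu (h.continuous_wave hV T _)
    (h.continuous_wave hV T _), ← integral_Ioi_mul_comp_sqrt hUsupp, Lcal]
  refine setIntegral_congr_fun measurableSet_Ioi fun y _ ↦ ?_
  simp only [Jcal_eq_oscIntegral hM hN hK hP hp hVsupp hψ hS]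
  rw [zero_mul, neg_zero, e_zero, mul_one, mul_assoc]

lemma norm_Lcal_zero_le (hM : 1 ≤ M) (hN : 0 < N) (hT : 0 < T) (hK : 0 < K) (hP : 0 < P)
    (hp : 0 < p) (hUsupp : Function.support U ⊆ Icc 1 2) (hu : IsWeight (squareWeight U) Cu)
    (hV : IsAmplitude V 1 2 D) (hVsupp : Function.support V ⊆ Icc 1 2)
    (h : IsPhasePair ψ S C) (hψ : EqOn ψ φ (Icc 1 2)) (hS : EqOn S Real.sqrt (Icc 1 2)) :
    ‖Lcal U V φ M N T γ (P ^ 2 * K ^ 2 / N) p p r₁ r₂ 0‖ ≤ 32 * C ^ 6 * Cu * D * D / T := by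
  rw [Lcal_zero_eq_kernelForm hM hN hK hP hp hUsupp hu hV.continuous hVsupp h hψ hS]
  exact h.norm_kernelForm_le hu hV hV hT (by positivity) _ _

lemma norm_Lcal_zero_le_of_ne (hM : 1 ≤ M) (hN : 0 < N) (hT : 0 < T) (hK : 0 < K) (hP : 0 < P)
    (hp : 0 < p) (hpP : (p : ℝ) ≤ 2 * P) (hUsupp : Function.support U ⊆ Icc 1 2)
    (hu : IsWeight (squareWeight U) Cu) (hu' : IsWeight (deriv (squareWeight U)) Cu)
    (hwu : IsWeight (fun w ↦ w * squareWeight U w) Cu)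
    (hV : IsAmplitude V 1 2 D) (hVsupp : Function.support V ⊆ Icc 1 2)
    (h : IsPhasePair ψ S C) (hψ : EqOn ψ φ (Icc 1 2)) (hS : EqOn S Real.sqrt (Icc 1 2))
    (hne : r₁ ≠ r₂) :
    ‖Lcal U V φ M N T γ (P ^ 2 * K ^ 2 / N) p p r₁ r₂ 0‖ ≤
      880 * C ^ 13 * Cu * D * D * P / (K * N * |(r₁ : ℝ) - r₂|) := by
  have hC := h.controlled.pos
  have hCu := hu.nonneg
  have hD := hV.nonneg one_le_two
  have hp0 : (0 : ℝ) < p := by exact_mod_cast hp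
  have hr : 0 < |(r₁ : ℝ) - r₂| := abs_pos.2 (sub_ne_zero.2 (by exact_mod_cast hne))
  have hshift : |(r₁ - γ * p) * N / p - (r₂ - γ * p) * N / p| = |(r₁ : ℝ) - r₂| * (N / p) := by
    rw [show (r₁ - γ * p) * N / p - (r₂ - γ * p) * N / p = (r₁ - r₂) * (N / p) by ring, abs_mul,
      abs_of_pos (div_pos hN hp0)]
  have hbound := h.abs_sub_mul_norm_kernelForm_le_div (B := 2 * (P * K) / p) hu hu' hwu hV hV hT
    (by positivity) ((r₁ - γ * p) * N / p) ((r₂ - γ * p) * N / p)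
  rw [hshift, ← Lcal_zero_eq_kernelForm hM hN hK hP hp hUsupp hu hV.continuous hVsupp h hψ hS,
    ← le_div_iff₀' (by positivity)] at hbound
  calc
    _ ≤ _ := hbound
    _ = 220 * C ^ 13 * Cu * D * D * p ^ 2 / (P * K * N * |(r₁ : ℝ) - r₂|) := by
      field_simp
      ring
    _ ≤ 220 * C ^ 13 * Cu * D * D * (2 * P) ^ 2 / (P * K * N * |(r₁ : ℝ) - r₂|) := by gcongr
    _ = 880 * C ^ 13 * Cu * D * D * P / (K * N * |(r₁ : ℝ) - r₂|) := by
      field_simp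
      ring

theorem stmt16_general (c' c₀ : ℝ) (hc₀ : 0 < c₀) (U : ℝ → ℝ) (hU : ContDiff ℝ ∞ U)
    (hUsupp : Function.support U ⊆ Icc 1 2) :
    ∃ C > 0, ∀ (M : ℕ) (N T K P γ : ℝ) (V : ℝ → ℂ) (φ : ℝ → ℝ) (p : ℕ) (r₁ r₂ : ℤ),
      1 ≤ M → 0 < N → 0 < T → 0 < K → ContDiff ℝ 1 V → Function.support V ⊆ Icc 1 2 →
      (∫ x in (1 / 2 : ℝ)..(5 / 2), ‖deriv V x‖) ≤ 1 →
      ContDiffOn ℝ 3 φ (Ioo (1 / 2) (5 / 2)) →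
      (∀ j : ℕ, j = 2 ∨ j = 3 → ∀ x ∈ Ioo ((1 : ℝ) / 2) (5 / 2),
        |iteratedDerivWithin j φ (Ioo (1 / 2) (5 / 2)) x| ≤ c') →
      (∀ x ∈ Ioo ((1 : ℝ) / 2) (5 / 2),
        c₀ ≤ |iteratedDerivWithin 2 φ (Ioo (1 / 2) (5 / 2)) x|) →
      0 < p → (p : ℝ) ≤ 2 * P →
      ‖Lcal U V φ M N T γ (P ^ 2 * K ^ 2 / N) p p r₁ r₂ 0‖ ≤ C / T ∧
      (r₁ ≠ r₂ → ‖Lcal U V φ M N T γ (P ^ 2 * K ^ 2 / N) p p r₁ r₂ 0‖ ≤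
        C * P / (K * N * |(r₁ : ℝ) - r₂|)) := by
  obtain ⟨Cu, hu, hu', hwu⟩ := exists_isWeight_deriv_id_mul (contDiff_squareWeight hU)
    (support_squareWeight_subset hUsupp)
  obtain ⟨C, hC, hext⟩ := exists_isPhasePair_eqOn c' hc₀
  have hCu := hu.nonneg
  refine ⟨1 + 880 * C ^ 13 * Cu, by positivity, ?_⟩
  intro M N T K P γ V φ p r₁ r₂ hM hN hT hK hV hVsupp hvar hφ hup hlow hp hpP
  obtain ⟨ψ, S, h, hψ, hS⟩ := hext φ hφ hup hlow
  have hP : 0 < P := by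
    have : (0 : ℝ) < p := by exact_mod_cast hp
    linarith
  have hvar' : ∫ x in (1 : ℝ)..2, ‖deriv V x‖ ≤ 1 :=
    (intervalIntegral.integral_mono_interval (by norm_num) (by norm_num) (by norm_num)
      (ae_of_all _ fun _ ↦ norm_nonneg _)
      ((hV.continuous_deriv le_rfl).norm.intervalIntegrable _ _)).trans hvar
  have hA := isAmplitude_of_support_subset_Icc hV hVsupp hvar'
  constructor
  · refine (norm_Lcal_zero_le hM hN hT hK hP hp hUsupp hu hA hVsupp h hψ hS).trans ?_
    have hpow : C ^ 6 * Cu ≤ C ^ 13 * Cu := by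
      gcongr
      norm_num
    gcongr
    nlinarith [show 0 ≤ C ^ 6 * Cu by positivity]
  · refine fun hne ↦ (norm_Lcal_zero_le_of_ne hM hN hT hK hP hp hpP hUsupp hu hu' hwu hA hVsupp h
      hψ hS hne).trans ?_
    gcongr
    linarith

end Reduction

/-- Bound for `ℒ(0)` in the case `p₁ = p₂ = p`: for `T ≥ T₀`,
`ℒ(0) ≪ 1/T`, and if moreover `r₁ ≠ r₂` then
`ℒ(0) ≪ P N^ε/(K N |r₁ − r₂|)`, with constants depending only on
`ε, M, c, c', c₀, U` and the `d_j`. -/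
theorem stmt16 (ε : ℝ) (hε : 0 < ε) (M : ℕ) (hM : 1 ≤ M)
    (c c' c₀ : ℝ) (hc : 0 < c) (hc' : 0 < c') (hc₀ : 0 < c₀) (d : ℕ → ℝ)
    (hd : ∀ j, 0 < d j)
    (U : ℝ → ℝ) (hU : ContDiff ℝ (⊤ : ℕ∞) U) (hUsupp : Function.support U ⊆ Set.Icc 1 2) :
    ∃ C T₀ : ℝ, 0 < C ∧ 0 < T₀ ∧
      ∀ (N T K P X Δ γ : ℝ) (V : ℝ → ℂ) (φ : ℝ → ℝ) (p : ℕ) (r₁ r₂ : ℤ),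
        1 < N → 1 < T → 1 < K → 1 < P → T₀ ≤ T →
        N ^ ε < K → K ≤ c' * T → N ^ (1 + ε) < P * K → X = P ^ 2 * K ^ 2 / N →
        ContDiff ℝ (⊤ : ℕ∞) V → Function.support V ⊆ Set.Icc 1 2 →
        1 ≤ Δ → Δ ≤ T * N ^ (-ε) →
        (∀ j : ℕ, ∀ x : ℝ, ‖iteratedDeriv j V x‖ ≤ d j * Δ ^ j) →
        (∫ x in (1 / 2 : ℝ)..(5 / 2), ‖deriv V x‖) ≤ 1 →
        ContDiffOn ℝ (⊤ : ℕ∞) φ (Set.Ioo (1 / 2) (5 / 2)) →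
        (∀ j : ℕ, j = 2 ∨ j = 3 → ∀ x ∈ Set.Ioo ((1 : ℝ) / 2) (5 / 2),
          |iteratedDerivWithin j φ (Set.Ioo (1 / 2) (5 / 2)) x| ≤ c') →
        (∀ x ∈ Set.Ioo ((1 : ℝ) / 2) (5 / 2),
          c₀ ≤ |iteratedDerivWithin 2 φ (Set.Ioo (1 / 2) (5 / 2)) x|) →
        Nat.Prime p → P ≤ (p : ℝ) → (p : ℝ) ≤ 2 * P →
        |(r₁ : ℝ) - γ * p| ≤ c * P * T / N →
        |(r₂ : ℝ) - γ * p| ≤ c * P * T / N →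
        ‖Lcal U V φ M N T γ X p p r₁ r₂ 0‖ ≤ C / T ∧
        (r₁ ≠ r₂ →
          ‖Lcal U V φ M N T γ X p p r₁ r₂ 0‖ ≤
            C * P * N ^ ε / (K * N * |(r₁ : ℝ) - (r₂ : ℝ)|)) := by
  obtain ⟨C, hC, hbound⟩ := stmt16_general c' c₀ hc₀ U hU hUsupp
  refine ⟨C, 1, hC, one_pos, ?_⟩
  intro N T K P X Δ γ V φ p r₁ r₂ hN hT hK hP _ _ _ _ hX hV hVsupp _ _ _ hvar hφ hup hlow hp _ hpP
    _ _
  subst hX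
  have hNε : 1 ≤ N ^ ε := Real.one_le_rpow hN.le hε.le
  obtain ⟨hdiag, hoff⟩ := hbound M N T K P γ V φ p r₁ r₂ hM (by linarith) (by linarith)
    (by linarith) (hV.of_le (by simp)) hVsupp hvar (contDiffOn_infty.1 hφ 3) hup hlow hp.pos hpP
  refine ⟨hdiag, fun hne ↦ (hoff hne).trans ?_⟩
  exact div_le_div_of_nonneg_right (le_mul_of_one_le_right (by positivity) hNε) (by positivity)
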